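/- Let V ⊂ Ĉ be open and nonempty (Ĉ the Riemann sphere), let f:V→Ĉ be holomorphic and nonconstant, and assume f does not extend to a conformal automorphism of Ĉ. Set U := Ĉ∖P(f), and assume that P(f) contains at least three points, so that U is hyperbolic. Let w ∈ F(f) be such that fⁿ(w) is defined and lies in U for all n ≥ 0. Then d_U(fⁿ(w), U ∩ J(f)) → ∞ as n → ∞, with the convention that this distance is ∞ when U ∩ J(f) = ∅. -/

import Mathlib

open Set Metric Filter Topology OnePoint

open scoped ENNReal

/-- The finite part of a point of the Riemann sphere `Ĉ = OnePoint ℂ` (junk value `0` at `∞`). -/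
noncomputable def finPart (u : OnePoint ℂ) : ℂ := Option.getD u 0

/-- The inversion `u ↦ 1/u` of the Riemann sphere, exchanging `0` and `∞`. -/
noncomputable def sphereInv : OnePoint ℂ → OnePoint ℂ := fun u =>
  Option.casesOn u ((0 : ℂ) : OnePoint ℂ)
    (fun z => if z = 0 then (∞ : OnePoint ℂ) else ((z⁻¹ : ℂ) : OnePoint ℂ))

/-- The coordinate chart of `Ĉ` adapted to the point `v`: the identity chart if `v` is finite,
and the chart `u ↦ 1/u` at `∞`. -/
noncomputable def sphereChart (v : OnePoint ℂ) : OnePoint ℂ → ℂ :=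
  Option.casesOn v (fun u => finPart (sphereInv u)) (fun _ => fun u => finPart u)

/-- The local parametrization of `Ĉ` near the point `u`: `x ↦ x` near a finite point and
`x ↦ 1/x` near `∞`. -/
noncomputable def sphereParam (u : OnePoint ℂ) : ℂ → OnePoint ℂ :=
  Option.casesOn u (fun x => sphereInv ((x : OnePoint ℂ))) (fun _ => fun x => (x : OnePoint ℂ))

/-- The chart coordinate of the point `u` of `Ĉ` (`0` for `u = ∞`). -/
noncomputable def sphereCoord (u : OnePoint ℂ) : ℂ :=
  Option.casesOn u (0 : ℂ) (fun z => z)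

/-- The chordal (spherical) metric on the Riemann sphere `Ĉ = OnePoint ℂ`. -/
noncomputable def chordalDist (u v : OnePoint ℂ) : ℝ :=
  Option.casesOn u
    (Option.casesOn v (0 : ℝ) fun w => 2 / Real.sqrt (1 + ‖w‖ ^ 2))
    (fun z => Option.casesOn v (2 / Real.sqrt (1 + ‖z‖ ^ 2))
      (fun w => 2 * dist z w / (Real.sqrt (1 + ‖z‖ ^ 2) * Real.sqrt (1 + ‖w‖ ^ 2))))

/-- A map `F : Ĉ → Ĉ` is holomorphic (meromorphic) at `u`: it is continuous at `u` and its
representative in the standard charts is analytic at the coordinate of `u`. -/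
def SphereAnalyticAt (F : OnePoint ℂ → OnePoint ℂ) (u : OnePoint ℂ) : Prop :=
  ContinuousAt F u ∧
    AnalyticAt ℂ (fun x : ℂ => sphereChart (F u) (F (sphereParam u x))) (sphereCoord u)

/-- A map `F : ℂ → Ĉ` is meromorphic at a point `z ∈ ℂ`: it is continuous at `z` and its
representative in the chart adapted to `F z` is analytic at `z`. -/
def SphereMeroAt (F : ℂ → OnePoint ℂ) (z : ℂ) : Prop :=
  ContinuousAt F z ∧ AnalyticAt ℂ (fun x : ℂ => sphereChart (F z) (F x)) z

/-- The family of iterates of `F` is equicontinuous on `N ⊆ Ĉ` w.r.t. the chordal metric. -/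
def SphereEquicontOn (F : OnePoint ℂ → OnePoint ℂ) (N : Set (OnePoint ℂ)) : Prop :=
  ∀ u ∈ N, ∀ ε > (0 : ℝ), ∃ δ > (0 : ℝ), ∀ v ∈ N, chordalDist u v < δ →
    ∀ n : ℕ, chordalDist (F^[n] u) (F^[n] v) < ε

/-- The Fatou set of a map `F` holomorphic on `V ⊆ Ĉ`: points having an open neighborhood `N`
such that either all iterates are defined on `N` (i.e. the orbit of `N` stays in `V`) and form
a normal (equicontinuous) family, or some iterated image of `N` avoids the closure of `V`. -/
def SphereFatou (F : OnePoint ℂ → OnePoint ℂ) (V : Set (OnePoint ℂ)) : Set (OnePoint ℂ) :=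
  {u : OnePoint ℂ | ∃ N : Set (OnePoint ℂ), IsOpen N ∧ u ∈ N ∧
    (((∀ n : ℕ, F^[n] '' N ⊆ V) ∧ SphereEquicontOn F N) ∨
      (∃ n : ℕ, (∀ k < n, F^[k] '' N ⊆ V) ∧ F^[n] '' N ⊆ (closure V)ᶜ))}

/-- `S` is the set of singular values of `F : V → Ĉ`: the smallest compact set `S` such that
`F : V ∩ F⁻¹(Ĉ∖S) → Ĉ∖S` is a covering map. -/
def SphereSingularSet (F : OnePoint ℂ → OnePoint ℂ) (V S : Set (OnePoint ℂ)) : Prop :=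
  IsCompact S ∧
    (∃ h : MapsTo F (V ∩ F ⁻¹' Sᶜ) Sᶜ,
      IsCoveringMap (MapsTo.restrict F (V ∩ F ⁻¹' Sᶜ) Sᶜ h)) ∧
    ∀ T : Set (OnePoint ℂ), IsCompact T →
      (∃ h : MapsTo F (V ∩ F ⁻¹' Tᶜ) Tᶜ,
        IsCoveringMap (MapsTo.restrict F (V ∩ F ⁻¹' Tᶜ) Tᶜ h)) → S ⊆ T

/-- The postsingular set of `F : V → Ĉ`: the closure of the forward orbit of the singular
values (iterated images taken where the iterates are defined). -/
def SpherePostsingular (F : OnePoint ℂ → OnePoint ℂ) (V S : Set (OnePoint ℂ)) :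
    Set (OnePoint ℂ) :=
  closure (⋃ n : ℕ, F^[n] '' {u : OnePoint ℂ | u ∈ S ∧ ∀ k < n, F^[k] u ∈ V})

/-- `π` is a holomorphic (universal) covering map from the unit disc onto `C ⊆ Ĉ`. -/
def SphereDiscCovering (π : ℂ → OnePoint ℂ) (C : Set (OnePoint ℂ)) : Prop :=
  (∀ a ∈ ball (0 : ℂ) 1, SphereMeroAt π a) ∧ π '' ball (0 : ℂ) 1 = C ∧
    ∃ h : MapsTo π (ball (0 : ℂ) 1) C,
      IsCoveringMap (MapsTo.restrict π (ball (0 : ℂ) 1) C h)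

/-- The Poincaré distance on the unit disc (for the metric `2|dz|/(1−|z|²)`). -/
noncomputable def discDist (a b : ℂ) : ℝ :=
  Real.log ((1 + ‖(a - b) / (1 - (starRingEnd ℂ) a * b)‖) /
    (1 - ‖(a - b) / (1 - (starRingEnd ℂ) a * b)‖))

/-- The hyperbolic distance on an open set `U ⊆ Ĉ`, induced (componentwise) by a holomorphic
universal covering `π : 𝔻 → U` from the Poincaré metric of the disc:
`d_U(x,y) = inf {d_𝔻(a,b) : π(a) = x, π(b) = y}` (and `∞` if `x, y` cannot be joined). -/
noncomputable def sphereHypDist (U : Set (OnePoint ℂ)) (x y : OnePoint ℂ) : ℝ≥0∞ :=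
  ⨅ (π : ℂ → OnePoint ℂ) (_ : SphereDiscCovering π (connectedComponentIn U x))
    (a : ℂ) (_ : a ∈ ball (0 : ℂ) 1 ∧ π a = x)
    (b : ℂ) (_ : b ∈ ball (0 : ℂ) 1 ∧ π b = y),
    ENNReal.ofReal (discDist a b)

/-- Hyperbolic distance from a point to a set, with `d_U(x, ∅) = ∞`. -/
noncomputable def sphereHypDistToSet (U : Set (OnePoint ℂ)) (x : OnePoint ℂ)
    (E : Set (OnePoint ℂ)) : ℝ≥0∞ :=
  ⨅ e ∈ E, sphereHypDist U x e

/-!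
Holomorphic maps of a disc into `Ĉ` which omit three fixed values are uniformly Lipschitz on smaller
discs for the chordal metric: a Möbius transformation moves the three values to `0, 1, ∞`, and
Robinson's explicit conformal density on `ℂ ∖ {0, 1}`, whose curvature is bounded above by a
negative constant, is controlled by the Ahlfors–Schwarz lemma.

Suppose that `fⁿ(w)` stays within bounded distance of `U ∩ J(f)` for infinitely many `n`. Then there
are holomorphic discs in `U` centred at these points whose restriction to a fixed smaller disc meets
`J(f)`. As `f` is a covering over `U` and `f⁻¹(U) ⊆ U`, they can be pulled back along the orbit to
discs centred at `w`, and then lifted to the universal covering of the component of `w` as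
self-maps of `𝔻` with a fixed value at `0`. Along an ultrafilter the lifts converge, and the points
lying over `J(f)` converge to a point `p ∈ 𝔻` which lies over `J(f)` as well. Since `w ∈ F(f)`, the
limit map is not constant, so by Hurwitz a neighbourhood of `p` is covered by infinitely many of the
lifts. Hence all iterates map its image into `U` and omit the three values, so `p` lies over `F(f)`,
a contradiction.
-/

/-- `u` has logarithmic Laplacian `4 * c` at `z₀`. The encoding avoids second derivatives: up to a
factor `‖E‖ ^ 2` with `E` analytic and nonvanishing, whose logarithm is harmonic, `u` is
`1 + c * ‖z - z₀‖ ^ 2 + o(‖z - z₀‖ ^ 2)`. -/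
def HasLogLaplacianAt (u : ℂ → ℝ) (c : ℝ) (z₀ : ℂ) : Prop :=
  ∃ (E : ℂ → ℂ) (v : ℂ → ℝ), AnalyticAt ℂ E z₀ ∧ E z₀ ≠ 0 ∧
    (u =ᶠ[𝓝 z₀] fun z => ‖E z‖ ^ 2 * v z) ∧
    (fun z => v z - 1 - c * ‖z - z₀‖ ^ 2) =o[𝓝 z₀] fun z => ‖z - z₀‖ ^ 2

/-- The isometries of constant curvature rest on this identity: `s = 1` is the case of the sphere,
`s = -1` that of the disc. -/
lemma norm_one_add_smul_conj_mul_sq (s : ℝ) (a b : ℂ) :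
    ‖1 + s * starRingEnd ℂ a * b‖ ^ 2 + s * ‖b - a‖ ^ 2
      = (1 + s * ‖a‖ ^ 2) * (1 + s * ‖b‖ ^ 2) := by
  simp only [← Complex.normSq_eq_norm_sq, Complex.normSq_apply, Complex.add_re, Complex.add_im,
    Complex.mul_re, Complex.mul_im, Complex.sub_re, Complex.sub_im, Complex.one_re, Complex.one_im,
    Complex.conj_re, Complex.conj_im, Complex.ofReal_re, Complex.ofReal_im]
  ring

lemma isLittleO_norm_sq_sub_of_hasDerivAt {m : ℂ → ℂ} {d z₀ : ℂ} (hm : HasDerivAt m d z₀)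
    (h0 : m z₀ = 0) :
    (fun z => ‖m z‖ ^ 2 - ‖d‖ ^ 2 * ‖z - z₀‖ ^ 2) =o[𝓝 z₀] fun z => ‖z - z₀‖ ^ 2 := by
  have hlin : (fun z => m z - (z - z₀) * d) =o[𝓝 z₀] fun z => z - z₀ := by
    simpa [h0] using hm.isLittleO
  have hdiff : (fun z => ‖m z‖ - ‖(z - z₀) * d‖) =o[𝓝 z₀] fun z => ‖z - z₀‖ :=
    (Asymptotics.IsBigO.of_norm_le fun z => abs_norm_sub_norm_le _ _).trans_isLittleO
      hlin.norm_left.norm_right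
  have hd : (fun z => ‖(z - z₀) * d‖) =O[𝓝 z₀] fun z => ‖z - z₀‖ :=
    .of_bound ‖d‖ (.of_forall fun z => by simp [mul_comm])
  have hsum : (fun z => ‖m z‖ + ‖(z - z₀) * d‖) =O[𝓝 z₀] fun z => ‖z - z₀‖ :=
    ((hdiff.isBigO.add (hd.const_mul_left 2))).congr_left fun z => by ring
  exact (hdiff.mul_isBigO hsum).congr (fun z => by rw [norm_mul]; ring) fun z => by ring

namespace HasLogLaplacianAt

variable {u u₁ u₂ : ℂ → ℝ} {c c₁ c₂ : ℝ} {z₀ : ℂ} {f : ℂ → ℂ}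

lemma congr (h : HasLogLaplacianAt u₁ c z₀) (he : u₂ =ᶠ[𝓝 z₀] u₁) : HasLogLaplacianAt u₂ c z₀ :=
  let ⟨E, v, hE, hE0, hu, hv⟩ := h
  ⟨E, v, hE, hE0, he.trans hu, hv⟩

lemma norm_sq (hf : AnalyticAt ℂ f z₀) (hf0 : f z₀ ≠ 0) :
    HasLogLaplacianAt (fun z => ‖f z‖ ^ 2) 0 z₀ :=
  ⟨f, 1, hf, hf0, .of_forall fun z => by simp, by simp⟩

lemma mul (h₁ : HasLogLaplacianAt u₁ c₁ z₀) (h₂ : HasLogLaplacianAt u₂ c₂ z₀) :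
    HasLogLaplacianAt (fun z => u₁ z * u₂ z) (c₁ + c₂) z₀ := by
  obtain ⟨E₁, v₁, hE₁, hE₁0, hu₁, hv₁⟩ := h₁
  obtain ⟨E₂, v₂, hE₂, hE₂0, hu₂, hv₂⟩ := h₂
  refine ⟨fun z => E₁ z * E₂ z, fun z => v₁ z * v₂ z, hE₁.mul hE₂, mul_ne_zero hE₁0 hE₂0, ?_, ?_⟩
  · filter_upwards [hu₁, hu₂] with z h₁ h₂
    rw [h₁, h₂, norm_mul]
    ring
  have hsq : Tendsto (fun z => ‖z - z₀‖ ^ 2) (𝓝 z₀) (𝓝 0) :=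
    Continuous.tendsto' (by fun_prop) _ _ (by simp)
  have bounded {e : ℝ} : (fun z => 1 + e * ‖z - z₀‖ ^ 2) =O[𝓝 z₀] fun _ => (1 : ℝ) :=
    ((hsq.const_mul e).const_add 1).isBigO_one ℝ
  have hsmall : (fun z => ‖z - z₀‖ ^ 2) =o[𝓝 z₀] fun _ => (1 : ℝ) :=
    (Asymptotics.isLittleO_one_iff ℝ).2 hsq
  have hv₂' : v₂ =O[𝓝 z₀] fun _ => (1 : ℝ) :=
    ((hv₂.trans hsmall).isBigO.add (bounded (e := c₂))).congr_left fun z => by ring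
  have hcross : (fun z => c₁ * c₂ * (‖z - z₀‖ ^ 2 * ‖z - z₀‖ ^ 2)) =o[𝓝 z₀]
      fun z => ‖z - z₀‖ ^ 2 * 1 :=
    ((Asymptotics.isBigO_refl _ _).mul_isLittleO hsmall).const_mul_left _
  refine (((hv₁.mul_isBigO hv₂').add (hv₂.mul_isBigO (bounded (e := c₁)))).add hcross).congr
    (fun z => by ring) fun z => mul_one _

lemma one_add_smul_norm_sq {s : ℝ} (hf : AnalyticAt ℂ f z₀) (hs : 0 < 1 + s * ‖f z₀‖ ^ 2) :
    HasLogLaplacianAt (fun z => 1 + s * ‖f z‖ ^ 2)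
      (s * ‖deriv f z₀ / ((1 + s * ‖f z₀‖ ^ 2 : ℝ) : ℂ)‖ ^ 2) z₀ := by
  set a := f z₀ with ha
  set t : ℝ := 1 + s * ‖a‖ ^ 2
  have hnorm : 1 + s * starRingEnd ℂ a * a = (t : ℂ) := by
    simp [t, mul_assoc, Complex.conj_mul']
  have ht : (t : ℂ) ≠ 0 := mod_cast hs.ne'
  have hden : AnalyticAt ℂ (fun z => 1 + s * starRingEnd ℂ a * f z) z₀ := by fun_prop
  have hden0 : 1 + s * starRingEnd ℂ a * f z₀ ≠ 0 := by rwa [← ha, hnorm]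
  have hm : HasDerivAt (fun z => (f z - a) / (1 + s * starRingEnd ℂ a * f z))
      (deriv f z₀ / t) z₀ := by
    have hf' := hf.differentiableAt.hasDerivAt
    refine ((hf'.sub_const a).div ((hf'.const_mul (s * starRingEnd ℂ a)).const_add 1)
      hden0).congr_deriv ?_
    rw [← ha, hnorm, sub_self, zero_mul, sub_zero]
    field_simp
  refine ⟨fun z => (1 + s * starRingEnd ℂ a * f z) / √t, fun z => 1 + s *
    ‖(f z - a) / (1 + s * starRingEnd ℂ a * f z)‖ ^ 2, hden.div_const, ?_, ?_, ?_⟩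
  · exact div_ne_zero hden0 (mod_cast (Real.sqrt_pos.2 hs).ne')
  · filter_upwards [hden.continuousAt.eventually_ne hden0] with z hz
    have hz' : ‖1 + s * starRingEnd ℂ a * f z‖ ^ 2 ≠ 0 := by positivity
    have hquot : 1 + s * ‖(f z - a) / (1 + s * starRingEnd ℂ a * f z)‖ ^ 2
        = t * (1 + s * ‖f z‖ ^ 2) / ‖1 + s * starRingEnd ℂ a * f z‖ ^ 2 := by
      rw [norm_div, div_pow, ← norm_one_add_smul_conj_mul_sq, add_div, div_self hz', mul_div_assoc]
    rw [hquot, norm_div, Complex.norm_real, Real.norm_of_nonneg (Real.sqrt_nonneg _), div_pow,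
      Real.sq_sqrt hs.le]
    field_simp
  · exact ((isLittleO_norm_sq_sub_of_hasDerivAt hm (by simp [ha])).const_mul_left s).congr_left
      fun z => by ring

lemma nonpos_of_isLocalMax (h : HasLogLaplacianAt u c z₀) (hmax : IsLocalMax u z₀) : c ≤ 0 := by
  obtain ⟨E, v, hE, hE0, hu, hv⟩ := h
  -- If `0 < c`, then `‖E‖` has a strict local maximum, against the maximum principle.
  by_contra! hc
  have hv0 : v z₀ = 1 := by
    have := (hv.def one_pos).self_of_nhds
    norm_num at this
    linarith
  have hgt : ∀ᶠ z in 𝓝[≠] z₀, 1 < v z := by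
    filter_upwards [(hv.def (half_pos hc)).filter_mono nhdsWithin_le_nhds,
      self_mem_nhdsWithin] with z hz hne
    have hpos : 0 < ‖z - z₀‖ ^ 2 := pow_pos (norm_pos_iff.2 (sub_ne_zero.2 hne)) 2
    rw [Real.norm_of_nonneg hpos.le] at hz
    nlinarith [(abs_le.1 hz).1]
  have hlt : ∀ᶠ z in 𝓝[≠] z₀, ‖E z‖ < ‖E z₀‖ := by
    filter_upwards [hgt, hmax.filter_mono nhdsWithin_le_nhds,
      hu.filter_mono nhdsWithin_le_nhds] with z hz hle huz
    rw [huz, hu.self_of_nhds] at hle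
    simp only [hv0, mul_one] at hle
    by_contra! hEz
    have : 0 < ‖E z‖ ^ 2 := pow_pos ((norm_pos_iff.2 hE0).trans_le hEz) 2
    nlinarith [pow_le_pow_left₀ (norm_nonneg _) hEz 2]
  have hloc : IsLocalMax (norm ∘ E) z₀ := by
    filter_upwards [eventually_nhdsWithin_iff.1 hlt] with z hz
    rcases eq_or_ne z z₀ with rfl | hne
    exacts [le_rfl, (hz hne).le]
  have hconst := Complex.eventually_eq_of_isLocalMax_norm
    (hE.eventually_analyticAt.mono fun z h => h.differentiableAt) hloc
  obtain ⟨z, hz, hzE⟩ := (hlt.and (hconst.filter_mono nhdsWithin_le_nhds)).exists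
  exact hz.ne (by rw [hzE])

lemma one_sub_norm_div_sq {w : ℂ} {r : ℝ} (h : 0 < 1 - ‖(z₀ - w) / r‖ ^ 2) :
    HasLogLaplacianAt (fun z => 1 - ‖(z - w) / r‖ ^ 2)
      (-(1 / (r * (1 - ‖(z₀ - w) / r‖ ^ 2)) ^ 2)) z₀ := by
  have hder : deriv (fun z => (z - w) / r) z₀ = 1 / r :=
    (((hasDerivAt_id z₀).sub_const w).div_const _).deriv
  have hnorm (t : ℝ) : ‖(1 : ℂ) / r / t‖ ^ 2 = 1 / (r * t) ^ 2 := by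
    rw [div_div, ← Complex.ofReal_mul, norm_div, norm_one, div_pow, one_pow, Complex.norm_real,
      Real.norm_eq_abs, sq_abs]
  have := one_add_smul_norm_sq (s := -1) (f := fun z => (z - w) / r) (z₀ := z₀) (by fun_prop)
    (by rwa [neg_one_mul, ← sub_eq_add_neg])
  simpa only [neg_one_mul, ← sub_eq_add_neg, hder, hnorm] using this

end HasLogLaplacianAt

/-- The **Ahlfors–Schwarz lemma**, evaluated at the centre of the disc. -/
theorem le_of_logLaplacian_ge {u : ℂ → ℝ} {w : ℂ} {r κ : ℝ} (hr : 0 < r) (hκ : 0 < κ)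
    (hu : ContinuousOn u (closedBall w r))
    (hcurv : ∀ z ∈ ball w r, 0 < u z → ∃ c, HasLogLaplacianAt u c z ∧ κ * u z ≤ c) :
    u w ≤ 2 / (κ * r ^ 2) := by
  set h : ℂ → ℝ := fun z => 1 - ‖(z - w) / r‖ ^ 2 with hh
  have hh_pos {z : ℂ} (hz : z ∈ ball w r) : 0 < h z := by
    refine sub_pos.2 (pow_lt_one₀ (norm_nonneg _) ?_ two_ne_zero)
    rw [norm_div, Complex.norm_real, Real.norm_of_nonneg hr.le, div_lt_one hr]
    exact mem_ball_iff_norm.1 hz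
  obtain ⟨z₀, hz₀, hmax⟩ := (isCompact_closedBall w r).exists_isMaxOn ⟨w, by simp [hr.le]⟩
    (f := fun z => u z * (h z * h z)) (hu.mul (by fun_prop))
  have hw : u w ≤ u z₀ * (h z₀ * h z₀) := by
    simpa [hh] using hmax (mem_closedBall_self hr.le)
  rcases le_or_gt (u z₀ * (h z₀ * h z₀)) 0 with hle | hpos
  · exact (hw.trans hle).trans (by positivity)
  have hball : z₀ ∈ ball w r := by
    refine mem_ball.2 <| (mem_closedBall.1 hz₀).lt_of_ne fun heq => hpos.ne' ?_
    rw [dist_eq_norm] at heq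
    simp [hh, heq, abs_of_pos hr, hr.ne']
  have hh₀ := hh_pos hball
  obtain ⟨c, hc, hκc⟩ := hcurv z₀ hball (pos_of_mul_pos_left hpos (by positivity))
  have hlap : HasLogLaplacianAt h (-(1 / (r * h z₀) ^ 2)) z₀ :=
    HasLogLaplacianAt.one_sub_norm_div_sq hh₀
  have hle := (hc.mul (hlap.mul hlap)).nonpos_of_isLocalMax
    (hmax.isLocalMax (closedBall_mem_nhds_of_mem hball))
  have hscaled : κ * u z₀ ≤ 2 / (r * h z₀) ^ 2 := by linarith [mul_one_div 2 ((r * h z₀) ^ 2)]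
  refine hw.trans ((le_div_iff₀ (by positivity)).2 ?_)
  rw [le_div_iff₀ (by positivity)] at hscaled
  linarith

/-- One factor of Robinson's conformal density on `ℂ ∖ {0, 1}`: the metric
`√(robinsonFactor w * robinsonFactor (w - 1)) |dw|` has curvature bounded above by a negative
constant and dominates the spherical metric. -/
noncomputable def robinsonFactor (w : ℂ) : ℝ :=
  (1 + (‖w‖ ^ (1 / 6 : ℝ)) ^ 2) / (‖w‖ ^ (1 / 6 : ℝ)) ^ 10

lemma robinsonFactor_pow_six (p : ℂ) : robinsonFactor (p ^ 6) = (1 + ‖p‖ ^ 2) / ‖p‖ ^ 10 := by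
  have : ‖p ^ 6‖ ^ (1 / 6 : ℝ) = ‖p‖ := by
    rw [norm_pow, ← Real.rpow_natCast, ← Real.rpow_mul (norm_nonneg _)]
    norm_num
  rw [robinsonFactor, this]

lemma continuousAt_robinsonFactor {w : ℂ} (h : w ≠ 0) : ContinuousAt robinsonFactor w := by
  have hroot : ContinuousAt (fun w : ℂ => ‖w‖ ^ (1 / 6 : ℝ)) w :=
    continuous_norm.continuousAt.rpow_const (.inr (by norm_num))
  exact (continuousAt_const.add (hroot.pow 2)).div (hroot.pow 10)
    (pow_ne_zero _ (Real.rpow_pos_of_pos (norm_pos_iff.2 h) _).ne')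

lemma exists_analyticAt_pow_eq {f : ℂ → ℂ} {z₀ : ℂ} (hf : AnalyticAt ℂ f z₀) (h0 : f z₀ ≠ 0)
    {n : ℕ} (hn : n ≠ 0) : ∃ P : ℂ → ℂ, AnalyticAt ℂ P z₀ ∧ ∀ z, P z ^ n = f z := by
  refine ⟨fun z => f z₀ ^ (n⁻¹ : ℂ) * (f z / f z₀) ^ (n⁻¹ : ℂ),
    analyticAt_const.mul ((hf.div analyticAt_const h0).cpow analyticAt_const ?_), fun z => ?_⟩
  · simp [h0]
  · rw [mul_pow, Complex.cpow_nat_inv_pow _ hn, Complex.cpow_nat_inv_pow _ hn, mul_div_cancel₀ _ h0]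

lemma hasLogLaplacianAt_robinsonFactor_comp {f : ℂ → ℂ} {z₀ p : ℂ} (hf : AnalyticAt ℂ f z₀)
    (hp : p ^ 6 = f z₀) (h0 : f z₀ ≠ 0) :
    HasLogLaplacianAt (fun z => robinsonFactor (f z))
      (‖deriv f z₀‖ ^ 2 / 36 * (1 / (‖p‖ ^ 10 * (1 + ‖p‖ ^ 2) ^ 2))) z₀ := by
  -- In terms of a sixth root `P` of `f`, the factor is `(1 + ‖P‖ ^ 2) * ‖P ^ (-5)‖ ^ 2`.
  obtain ⟨P, hPan, hP⟩ := exists_analyticAt_pow_eq hf h0 (n := 6) (by norm_num)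
  have hP0 : P z₀ ≠ 0 := fun h => h0 (by rw [← hP, h, zero_pow (by norm_num)])
  have hnorm : ‖P z₀‖ = ‖p‖ := by
    rw [← pow_left_inj₀ (norm_nonneg _) (norm_nonneg _) (by norm_num : 6 ≠ 0), ← norm_pow,
      ← norm_pow, hP, hp]
  have hderiv : deriv f z₀ = 6 * P z₀ ^ 5 * deriv P z₀ := by
    rw [← funext hP]
    exact (hPan.differentiableAt.hasDerivAt.fun_pow 6).deriv
  have hlap := (HasLogLaplacianAt.one_add_smul_norm_sq (s := 1) hPan (by positivity)).mul
    (HasLogLaplacianAt.norm_sq ((hPan.pow 5).inv (pow_ne_zero 5 hP0))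
      (inv_ne_zero (pow_ne_zero 5 hP0)))
  convert hlap.congr (.of_forall fun z => ?_) using 1
  · rw [hderiv, ← hnorm, norm_div, Complex.norm_real, Real.norm_of_nonneg (by positivity)]
    have : ‖P z₀‖ ≠ 0 := norm_ne_zero_iff.2 hP0
    simp only [norm_mul, norm_pow, Complex.norm_ofNat]
    field_simp
    ring
  · rw [← hP, robinsonFactor_pow_six]
    simp only [Pi.inv_apply, Pi.pow_apply, norm_inv, norm_pow]
    ring

lemma robinson_density_le_curvature {x y : ℝ} (hx : 0 < x) (hy : 0 < y)
    (hxy : 1 ≤ x ^ 6 + y ^ 6) :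
    (1 + x ^ 2) / x ^ 10 * ((1 + y ^ 2) / y ^ 10)
      ≤ 162 * (1 / (x ^ 10 * (1 + x ^ 2) ^ 2) + 1 / (y ^ 10 * (1 + y ^ 2) ^ 2)) := by
  wlog hle : x ≤ y generalizing x y
  · rw [mul_comm, add_comm (1 / _)]
    exact this hy hx (by linarith) (by linarith)
  have hy2 : 1 / 2 ≤ y ^ 2 := by
    by_contra! hlt
    have hx6 : x ^ 6 ≤ y ^ 6 := by gcongr
    have hy6 : y ^ 6 < (1 / 2) ^ 3 := by
      calc y ^ 6 = (y ^ 2) ^ 3 := by ring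
        _ < _ := by gcongr
    norm_num at hy6
    linarith
  have hx2 : x ^ 2 ≤ y ^ 2 := by gcongr
  have hpoly : (1 + x ^ 2) ^ 3 * (1 + y ^ 2) ≤ 162 * y ^ 10 := by
    calc (1 + x ^ 2) ^ 3 * (1 + y ^ 2) ≤ (3 * y ^ 2) ^ 3 * (3 * y ^ 2) := by
          gcongr <;> linarith
      _ = 162 * (1 / 2 * y ^ 8) := by ring
      _ ≤ 162 * (y ^ 2 * y ^ 8) := by gcongr
      _ = 162 * y ^ 10 := by ring
  calc (1 + x ^ 2) / x ^ 10 * ((1 + y ^ 2) / y ^ 10)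
      = (1 + x ^ 2) ^ 3 * (1 + y ^ 2) / y ^ 10 * (1 / (x ^ 10 * (1 + x ^ 2) ^ 2)) := by
        field_simp
    _ ≤ 162 * (1 / (x ^ 10 * (1 + x ^ 2) ^ 2)) := by
        gcongr
        rwa [div_le_iff₀ (by positivity)]
    _ ≤ _ := by
        gcongr
        exact le_add_of_nonneg_right (by positivity)

lemma one_le_mul_robinson_density {w : ℂ} (h0 : w ≠ 0) (h1 : w ≠ 1) :
    1 ≤ 16 * (1 + ‖w‖ ^ 2) ^ 2 * (robinsonFactor w * robinsonFactor (w - 1)) := by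
  obtain ⟨p, rfl⟩ : ∃ p : ℂ, p ^ 6 = w := IsAlgClosed.exists_pow_nat_eq w (by norm_num)
  obtain ⟨q, hq⟩ : ∃ q : ℂ, q ^ 6 = p ^ 6 - 1 := IsAlgClosed.exists_pow_nat_eq _ (by norm_num)
  rw [← hq, robinsonFactor_pow_six, robinsonFactor_pow_six, norm_pow]
  have hx : 0 < ‖p‖ := norm_pos_iff.2 fun h => h0 (by rw [h, zero_pow (by norm_num)])
  have hy : 0 < ‖q‖ := norm_pos_iff.2 fun h => h1 (sub_eq_zero.1 (by
    rw [← hq, h, zero_pow (by norm_num)]))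
  have hle : ‖q‖ ^ 6 ≤ 1 + ‖p‖ ^ 6 := by
    rw [← norm_pow, ← norm_pow, hq, add_comm]
    exact (norm_sub_le _ _).trans_eq (by rw [norm_one])
  set x := ‖p‖
  set y := ‖q‖
  set s := x ^ 6 with hs
  have hcube : (x ^ 8 * y ^ 8) ^ 3 ≤ (16 * (1 + s ^ 2) ^ 2) ^ 3 := by
    calc (x ^ 8 * y ^ 8) ^ 3 = s ^ 4 * (y ^ 6) ^ 4 := by rw [hs]; ring
      _ ≤ (1 + s) ^ 4 * (1 + s) ^ 4 := by gcongr; linarith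
      _ = ((1 + s) ^ 2) ^ 4 := by ring
      _ ≤ (2 * (1 + s ^ 2)) ^ 4 := by gcongr; nlinarith [sq_nonneg (1 - s)]
      _ = 16 * (1 + s ^ 2) ^ 4 * 1 := by ring
      _ ≤ 4096 * (1 + s ^ 2) ^ 4 * (1 + s ^ 2) ^ 2 := by
        gcongr
        · norm_num
        · exact one_le_pow₀ (by nlinarith)
      _ = _ := by ring
  rw [div_mul_div_comm, mul_div_assoc', le_div_iff₀ (by positivity)]
  calc 1 * (x ^ 10 * y ^ 10) = x ^ 8 * y ^ 8 * (x ^ 2 * y ^ 2) := by ring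
    _ ≤ 16 * (1 + s ^ 2) ^ 2 * ((1 + x ^ 2) * (1 + y ^ 2)) := by
      refine mul_le_mul (le_of_pow_le_pow_left₀ three_ne_zero (by positivity) hcube) ?_
        (by positivity) (by positivity)
      gcongr <;> linarith

lemma exists_logLaplacian_robinson_density_ge {g : ℂ → ℂ} {z : ℂ} (hg : AnalyticAt ℂ g z)
    (h0 : g z ≠ 0) (h1 : g z ≠ 1) (hd : deriv g z ≠ 0) :
    ∃ c, HasLogLaplacianAt
        (fun z => ‖deriv g z‖ ^ 2 * (robinsonFactor (g z) * robinsonFactor (g z - 1))) c z ∧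
      1 / 5832 * (‖deriv g z‖ ^ 2 * (robinsonFactor (g z) * robinsonFactor (g z - 1))) ≤ c := by
  obtain ⟨p, hp⟩ : ∃ p : ℂ, p ^ 6 = g z := IsAlgClosed.exists_pow_nat_eq _ (by norm_num)
  obtain ⟨q, hq⟩ : ∃ q : ℂ, q ^ 6 = g z - 1 := IsAlgClosed.exists_pow_nat_eq _ (by norm_num)
  have hp0 : p ≠ 0 := fun h => h0 (by rw [← hp, h, zero_pow (by norm_num)])
  have hq0 : q ≠ 0 := fun h => h1 (sub_eq_zero.1 (by rw [← hq, h, zero_pow (by norm_num)]))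
  have hsum : 1 ≤ ‖p‖ ^ 6 + ‖q‖ ^ 6 := by
    calc 1 = ‖p ^ 6 - q ^ 6‖ := by rw [hp, hq, sub_sub_cancel, norm_one]
      _ ≤ _ := (norm_sub_le _ _).trans_eq (by rw [norm_pow, norm_pow])
  have hlap₀ := hasLogLaplacianAt_robinsonFactor_comp hg hp h0
  have hlap₁ := hasLogLaplacianAt_robinsonFactor_comp (f := fun z => g z - 1)
    (hg.sub analyticAt_const) hq (sub_ne_zero.2 h1)
  rw [deriv_sub_const] at hlap₁
  refine ⟨_, (HasLogLaplacianAt.norm_sq hg.deriv hd).mul (hlap₀.mul hlap₁), ?_⟩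
  rw [← hq, ← hp, robinsonFactor_pow_six, robinsonFactor_pow_six, zero_add, ← mul_add]
  calc _ ≤ 1 / 5832 * (‖deriv g z‖ ^ 2 * (162 * (1 / (‖p‖ ^ 10 * (1 + ‖p‖ ^ 2) ^ 2) +
        1 / (‖q‖ ^ 10 * (1 + ‖q‖ ^ 2) ^ 2)))) := by
        refine mul_le_mul_of_nonneg_left (mul_le_mul_of_nonneg_left ?_ (sq_nonneg _)) (by norm_num)
        exact robinson_density_le_curvature (norm_pos_iff.2 hp0) (norm_pos_iff.2 hq0) hsum
    _ = _ := by ring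

/-- **Landau's theorem** in spherical form. -/
theorem norm_deriv_le_of_omits_zero_one {g : ℂ → ℂ} {w : ℂ} {r : ℝ} (hr : 0 < r)
    (hg : AnalyticOnNhd ℂ g (closedBall w r)) (h0 : ∀ z ∈ closedBall w r, g z ≠ 0)
    (h1 : ∀ z ∈ closedBall w r, g z ≠ 1) :
    ‖deriv g w‖ ≤ 432 / r * (1 + ‖g w‖ ^ 2) := by
  set u : ℂ → ℝ := fun z => ‖deriv g z‖ ^ 2 * (robinsonFactor (g z) * robinsonFactor (g z - 1))
    with hu
  have hcont : ContinuousOn u (closedBall w r) := fun z hz => by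
    have hgz := (hg z hz).continuousAt
    exact (((hg z hz).deriv.continuousAt.norm.pow 2).mul
      ((ContinuousAt.comp (f := g) (continuousAt_robinsonFactor (h0 z hz)) hgz).mul
        (ContinuousAt.comp (f := fun z => g z - 1) (continuousAt_robinsonFactor
          (sub_ne_zero.2 (h1 z hz))) (hgz.sub continuousAt_const)))).continuousWithinAt
  have hbound : u w ≤ 2 / (1 / 5832 * r ^ 2) := by
    refine le_of_logLaplacian_ge hr (by norm_num) hcont fun z hz hpos => ?_
    have hz' := ball_subset_closedBall hz
    exact exists_logLaplacian_robinson_density_ge (hg z hz') (h0 z hz') (h1 z hz')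
      fun hd => hpos.ne' (by simp [hu, hd])
  have hw : w ∈ closedBall w r := mem_closedBall_self hr.le
  refine le_of_sq_le_sq ?_ (by positivity)
  calc ‖deriv g w‖ ^ 2 = ‖deriv g w‖ ^ 2 * 1 := by ring
    _ ≤ ‖deriv g w‖ ^ 2 * (16 * (1 + ‖g w‖ ^ 2) ^ 2 *
        (robinsonFactor (g w) * robinsonFactor (g w - 1))) := by
      gcongr
      exact one_le_mul_robinson_density (h0 w hw) (h1 w hw)
    _ = 16 * (1 + ‖g w‖ ^ 2) ^ 2 * u w := by ring
    _ ≤ 16 * (1 + ‖g w‖ ^ 2) ^ 2 * (2 / (1 / 5832 * r ^ 2)) := by gcongr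
    _ = (432 / r * (1 + ‖g w‖ ^ 2)) ^ 2 := by
      field_simp
      norm_num

/-- Inverse stereographic projection onto the sphere of radius `1 / 2` resting on the origin, so
that the chordal distance of `u, v ∈ ℂ` is twice the distance of their images. -/
noncomputable def stereoInv {E : Type*} [NormedAddCommGroup E] [NormedSpace ℝ E] (u : E) :
    WithLp 2 (E × ℝ) :=
  WithLp.toLp 2 ((1 + ‖u‖ ^ 2)⁻¹ • u, (1 + ‖u‖ ^ 2)⁻¹)

section Stereographic

variable {E : Type*} [NormedAddCommGroup E] [InnerProductSpace ℝ E]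

lemma norm_stereoInv_sub (u v : E) :
    ‖stereoInv u - stereoInv v‖ = ‖u - v‖ / (√(1 + ‖u‖ ^ 2) * √(1 + ‖v‖ ^ 2)) := by
  have hu : 1 + ‖u‖ ^ 2 ≠ 0 := by positivity
  have hv : 1 + ‖v‖ ^ 2 ≠ 0 := by positivity
  rw [← pow_left_inj₀ (norm_nonneg _) (by positivity) two_ne_zero, div_pow, mul_pow,
    Real.sq_sqrt (by positivity), Real.sq_sqrt (by positivity), WithLp.prod_norm_sq_eq_of_L2]
  simp only [stereoInv, WithLp.sub_fst, WithLp.sub_snd, WithLp.toLp_fst, WithLp.toLp_snd,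
    norm_sub_sq_real, norm_smul, inner_smul_left, inner_smul_right, Real.norm_eq_abs, mul_pow,
    sq_abs, conj_trivial]
  field_simp
  ring

lemma norm_stereoInv (u : E) : ‖stereoInv u‖ = (√(1 + ‖u‖ ^ 2))⁻¹ := by
  have hu : 1 + ‖u‖ ^ 2 ≠ 0 := by positivity
  rw [← pow_left_inj₀ (norm_nonneg _) (by positivity) two_ne_zero, inv_pow,
    Real.sq_sqrt (by positivity), WithLp.prod_norm_sq_eq_of_L2]
  simp only [stereoInv, WithLp.toLp_fst, WithLp.toLp_snd, norm_smul, Real.norm_eq_abs, mul_pow,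
    sq_abs]
  field_simp
  ring

lemma exists_hasDerivAt_stereoInv_comp {γ : ℝ → E} {γ' : E} {t : ℝ} (hγ : HasDerivAt γ γ' t) :
    ∃ w, HasDerivAt (fun t => stereoInv (γ t)) w t ∧ ‖w‖ = (1 + ‖γ t‖ ^ 2)⁻¹ * ‖γ'‖ := by
  have hn := (hγ.norm_sq.const_add 1).inv (by positivity : 1 + ‖γ t‖ ^ 2 ≠ 0)
  refine ⟨_, (WithLp.prodContinuousLinearEquiv 2 ℝ E ℝ).symm.toContinuousLinearMap.hasFDerivAt
    |>.comp_hasDerivAt t ((hn.smul hγ).prodMk hn), ?_⟩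
  have hne : 1 + ‖γ t‖ ^ 2 ≠ 0 := by positivity
  rw [← pow_left_inj₀ (norm_nonneg _) (by positivity) two_ne_zero, WithLp.prod_norm_sq_eq_of_L2]
  simp [norm_add_sq_real, norm_smul, inner_smul_left, inner_smul_right, mul_pow,
    real_inner_comm γ']
  field_simp
  simp only [sq_abs]
  ring

end Stereographic

lemma norm_stereoInv_sub_le_of_norm_deriv_le {g : ℂ → ℂ} {s : Set ℂ} {B : ℝ} (hs : Convex ℝ s)
    (hg : ∀ z ∈ s, DifferentiableAt ℂ g z) (hB : ∀ z ∈ s, ‖deriv g z‖ ≤ B * (1 + ‖g z‖ ^ 2))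
    {x y : ℂ} (hx : x ∈ s) (hy : y ∈ s) :
    ‖stereoInv (g y) - stereoInv (g x)‖ ≤ B * ‖y - x‖ := by
  set γ : ℝ → ℂ := fun t => g (AffineMap.lineMap x y t)
  have hmem {t : ℝ} (ht : t ∈ Icc 0 1) : (AffineMap.lineMap x y t : ℂ) ∈ s :=
    hs.lineMap_mem hx hy ht
  have hγ {t : ℝ} (ht : t ∈ Icc 0 1) :
      HasDerivAt γ ((y - x) • deriv g (AffineMap.lineMap x y t)) t :=
    (hg _ (hmem ht)).hasDerivAt.scomp t AffineMap.hasDerivAt_lineMap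
  choose! w hw hnorm using fun t (ht : t ∈ Icc (0 : ℝ) 1) =>
    exists_hasDerivAt_stereoInv_comp (hγ ht)
  have := norm_image_sub_le_of_norm_deriv_le_segment_01' (C := B * ‖y - x‖)
    (fun t ht => (hw t ht).hasDerivWithinAt) fun t ht => by
      have ht := Ico_subset_Icc_self ht
      rw [hnorm t ht, norm_smul, inv_mul_le_iff₀ (by positivity)]
      calc _ ≤ ‖y - x‖ * (B * (1 + ‖γ t‖ ^ 2)) := by
            gcongr
            exact hB _ (hmem ht)
        _ = _ := by ring
  simpa [γ] using this

/-- The point `∞` completes the inverse stereographic projection to an embedding of `Ĉ` which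
scales the chordal metric by `1 / 2`. -/
noncomputable def sphereEmb (u : OnePoint ℂ) : WithLp 2 (ℂ × ℝ) := u.elim 0 stereoInv

lemma chordalDist_eq_norm_sphereEmb_sub (u v : OnePoint ℂ) :
    chordalDist u v = 2 * ‖sphereEmb u - sphereEmb v‖ := by
  induction u using OnePoint.rec with
  | infty =>
    induction v using OnePoint.rec with
    | infty => simp [sphereEmb, show chordalDist ∞ ∞ = 0 from rfl]
    | coe w =>
      rw [show chordalDist ∞ w = 2 / √(1 + ‖w‖ ^ 2) from rfl]
      simp [sphereEmb, norm_stereoInv, div_eq_mul_inv]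
  | coe z =>
    induction v using OnePoint.rec with
    | infty =>
      rw [show chordalDist z ∞ = 2 / √(1 + ‖z‖ ^ 2) from rfl]
      simp [sphereEmb, norm_stereoInv, div_eq_mul_inv]
    | coe w =>
      rw [show chordalDist z w = 2 * dist z w / (√(1 + ‖z‖ ^ 2) * √(1 + ‖w‖ ^ 2)) from rfl]
      simp [sphereEmb, norm_stereoInv_sub, dist_eq_norm, mul_div_assoc]

lemma continuous_sphereEmb : Continuous sphereEmb := by
  rw [OnePoint.continuous_iff]
  refine ⟨?_, ?_⟩
  · rw [coclosedCompact_eq_cocompact, ← Metric.cobounded_eq_cocompact]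
    refine tendsto_zero_iff_norm_tendsto_zero.2 ?_
    refine (tendsto_inv_atTop_zero.comp (Real.tendsto_sqrt_atTop.comp
      (tendsto_atTop_add_const_left _ 1 ((tendsto_pow_atTop two_ne_zero).comp
        tendsto_norm_cobounded_atTop)))).congr fun z => ?_
    exact (norm_stereoInv z).symm
  · change Continuous (stereoInv : ℂ → _)
    unfold stereoInv
    have (u : ℂ) : 1 + ‖u‖ ^ 2 ≠ 0 := by positivity
    fun_prop (disch := assumption)

lemma sphereEmb_injective : Function.Injective sphereEmb := fun u v h => by
  have hne (z : ℂ) : √(1 + ‖z‖ ^ 2) ≠ 0 := by positivity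
  rw [← sub_eq_zero, ← norm_eq_zero] at h
  induction u using OnePoint.rec <;> induction v using OnePoint.rec <;>
    simp_all [sphereEmb, norm_stereoInv, norm_stereoInv_sub, sub_eq_zero]

lemma nhds_basis_chordalDist (u : OnePoint ℂ) :
    (𝓝 u).HasBasis (fun ε : ℝ => 0 < ε) fun ε => {v | chordalDist u v < ε} := by
  rw [(continuous_sphereEmb.isClosedEmbedding sphereEmb_injective).isInducing.nhds_eq_comap]
  refine (Metric.nhds_basis_ball.comap _).to_hasBasis (fun ε hε => ⟨2 * ε, by positivity, ?_⟩)
    fun ε hε => ⟨ε / 2, by positivity, ?_⟩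
  all_goals
    intro v hv
    simp only [mem_ofPred_eq, mem_preimage, mem_ball', dist_eq_norm,
      chordalDist_eq_norm_sphereEmb_sub] at hv ⊢
    linarith

theorem chordalDist_le_of_omits_zero_one {g : ℂ → ℂ} {c : ℂ} {R : ℝ} (hR : 0 < R)
    (hg : DifferentiableOn ℂ g (ball c R)) (h0 : ∀ z ∈ ball c R, g z ≠ 0)
    (h1 : ∀ z ∈ ball c R, g z ≠ 1) {x y : ℂ} (hx : x ∈ ball c (R / 2)) (hy : y ∈ ball c (R / 2)) :
    chordalDist (g x) (g y) ≤ 3456 / R * dist x y := by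
  have hsub {z : ℂ} (hz : z ∈ ball c (R / 2)) : closedBall z (R / 4) ⊆ ball c R :=
    closedBall_subset_ball' (by linarith [mem_ball.1 hz])
  have han : AnalyticOnNhd ℂ g (ball c R) := hg.analyticOnNhd isOpen_ball
  have key := norm_stereoInv_sub_le_of_norm_deriv_le (convex_ball c (R / 2))
    (fun z hz => (han z (ball_subset_ball (by linarith) hz)).differentiableAt)
    (fun z hz => norm_deriv_le_of_omits_zero_one (by positivity) (han.mono (hsub hz))
      (fun ζ hζ => h0 ζ (hsub hz hζ)) fun ζ hζ => h1 ζ (hsub hz hζ)) hy hx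
  rw [chordalDist_eq_norm_sphereEmb_sub]
  calc _ ≤ 2 * (432 / (R / 4) * ‖x - y‖) := mul_le_mul_of_nonneg_left key zero_le_two
    _ = 3456 / R * dist x y := by
      rw [dist_eq_norm]
      ring

section CrossRatio

/-- First homogeneous coordinate of a point of the Riemann sphere. -/
noncomputable def homNum (u : OnePoint ℂ) : ℂ := u.elim 1 id

/-- Second homogeneous coordinate of a point of the Riemann sphere. -/
noncomputable def homDen (u : OnePoint ℂ) : ℂ := u.elim 0 fun _ => 1

/-- The determinant of the homogeneous coordinates of two points. -/
noncomputable def homDet (u v : OnePoint ℂ) : ℂ := homNum u * homDen v - homNum v * homDen u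

/-- The Hermitian norm of the homogeneous coordinates of a point. -/
noncomputable def homNorm (u : OnePoint ℂ) : ℝ := √(‖homNum u‖ ^ 2 + ‖homDen u‖ ^ 2)

/-- The cross-ratio, i.e. the Möbius transformation of `u` sending `a, b, c` to `0, ∞, 1` (with
junk value `0` at `u = b`). -/
noncomputable def crossRatio (a b c u : OnePoint ℂ) : ℂ :=
  (homDet u a * homDet c b) / (homDet u b * homDet c a)

variable {a b c u v : OnePoint ℂ}

lemma homDet_eq_zero_iff : homDet u v = 0 ↔ u = v := by
  induction u using OnePoint.rec <;> induction v using OnePoint.rec <;>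
    simp [homDet, homNum, homDen, sub_eq_zero]

lemma homNorm_pos (u : OnePoint ℂ) : 0 < homNorm u := by
  refine Real.sqrt_pos.2 ?_
  induction u using OnePoint.rec with
  | infty => simp [homNum, homDen]
  | coe z =>
    simp only [homNum, homDen, OnePoint.elim_some, norm_one]
    positivity

lemma homNorm_coe_le (z : ℂ) : homNorm z ≤ ‖z‖ + 1 := by
  refine Real.sqrt_le_iff.2 ⟨by positivity, ?_⟩
  simp only [homNum, homDen, OnePoint.elim_some, id, norm_one]
  nlinarith [norm_nonneg z]

lemma chordalDist_eq_homDet (u v : OnePoint ℂ) :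
    chordalDist u v = 2 * ‖homDet u v‖ / (homNorm u * homNorm v) := by
  induction u using OnePoint.rec <;> induction v using OnePoint.rec <;>
    simp [chordalDist_eq_norm_sphereEmb_sub, sphereEmb, norm_stereoInv, norm_stereoInv_sub, homDet,
      homNorm, homNum, homDen, add_comm, div_eq_mul_inv, mul_assoc]

lemma norm_homDet_le (u v : OnePoint ℂ) : ‖homDet u v‖ ≤ homNorm u * homNorm v := by
  rw [homNorm, homNorm, ← Real.sqrt_mul (by positivity)]
  refine Real.le_sqrt_of_sq_le ?_
  calc ‖homDet u v‖ ^ 2 ≤ (‖homNum u‖ * ‖homDen v‖ + ‖homNum v‖ * ‖homDen u‖) ^ 2 := by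
        gcongr
        rw [← norm_mul, ← norm_mul]
        exact norm_sub_le _ _
    _ ≤ _ := by nlinarith [sq_nonneg (‖homNum u‖ * ‖homNum v‖ - ‖homDen v‖ * ‖homDen u‖)]

lemma crossRatio_ne_zero (hua : u ≠ a) (hub : u ≠ b) (hca : c ≠ a) (hcb : c ≠ b) :
    crossRatio a b c u ≠ 0 := by
  simp [crossRatio, homDet_eq_zero_iff, *]

lemma crossRatio_ne_one (hub : u ≠ b) (huc : u ≠ c) (hab : a ≠ b) (hca : c ≠ a) :
    crossRatio a b c u ≠ 1 := by
  intro h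
  rw [crossRatio, div_eq_one_iff_eq (by simp [homDet_eq_zero_iff, *])] at h
  have : homDet u c * homDet a b = 0 := by
    simp only [homDet] at *
    linear_combination h
  simp [homDet_eq_zero_iff, *] at this

lemma homNorm_crossRatio_mul_le (hub : u ≠ b) (hca : c ≠ a) :
    homNorm (crossRatio a b c u) * ‖homDet u b * homDet c a‖ ≤
      (homNorm a * ‖homDet c b‖ + homNorm b * ‖homDet c a‖) * homNorm u := by
  have hne : ‖homDet u b * homDet c a‖ ≠ 0 := by simp [homDet_eq_zero_iff, *]
  calc _ ≤ (‖crossRatio a b c u‖ + 1) * ‖homDet u b * homDet c a‖ := by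
        gcongr
        exact homNorm_coe_le _
    _ = ‖homDet u a‖ * ‖homDet c b‖ + ‖homDet u b‖ * ‖homDet c a‖ := by
        rw [crossRatio, norm_div, add_mul, div_mul_cancel₀ _ hne, one_mul, norm_mul, norm_mul]
    _ ≤ (homNorm u * homNorm a) * ‖homDet c b‖ + (homNorm u * homNorm b) * ‖homDet c a‖ := by
        gcongr <;> exact norm_homDet_le _ _
    _ = _ := by ring

lemma homDet_crossRatio (hub : u ≠ b) (hvb : v ≠ b) (hca : c ≠ a) :
    homDet (crossRatio a b c u) (crossRatio a b c v) =
      homDet a b * homDet c a * homDet c b * homDet u v /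
        ((homDet u b * homDet c a) * (homDet v b * homDet c a)) := by
  have hu : homDet u b ≠ 0 := by simpa [homDet_eq_zero_iff]
  have hv : homDet v b ≠ 0 := by simpa [homDet_eq_zero_iff]
  have hc : homDet c a ≠ 0 := by simpa [homDet_eq_zero_iff]
  have hsub (z w : ℂ) : homDet z w = z - w := by simp [homDet, homNum, homDen]
  rw [hsub, crossRatio, crossRatio, div_sub_div _ _ (mul_ne_zero hu hc) (mul_ne_zero hv hc)]
  congr 1
  simp only [homDet]
  ring

lemma exists_chordalDist_le_mul_crossRatio (hab : a ≠ b) (hca : c ≠ a) (hcb : c ≠ b) :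
    ∃ K > 0, ∀ u v, u ≠ b → v ≠ b →
      chordalDist u v ≤ K * chordalDist (crossRatio a b c u) (crossRatio a b c v) := by
  set D := ‖homDet a b * homDet c a * homDet c b‖ with hD
  set L := homNorm a * ‖homDet c b‖ + homNorm b * ‖homDet c a‖
  have hDpos : 0 < D := norm_pos_iff.2 (by simp [homDet_eq_zero_iff, *])
  have hLpos : 0 < L := add_pos_of_pos_of_nonneg
    (mul_pos (homNorm_pos a) (norm_pos_iff.2 (by simpa [homDet_eq_zero_iff])))
    (mul_nonneg (homNorm_pos b).le (norm_nonneg _))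
  refine ⟨L ^ 2 / D, by positivity, fun u v hub hvb => ?_⟩
  have hpos {u} (hub : u ≠ b) :
      0 < homNorm (crossRatio a b c u) * ‖homDet u b * homDet c a‖ :=
    mul_pos (homNorm_pos _) (norm_pos_iff.2 (by simp [homDet_eq_zero_iff, *]))
  have hu := hpos hub
  have hv := hpos hvb
  calc chordalDist u v
      = L ^ 2 / D * (2 * (D * ‖homDet u v‖) / ((L * homNorm u) * (L * homNorm v))) := by
        rw [chordalDist_eq_homDet]
        field_simp
    _ ≤ L ^ 2 / D * (2 * (D * ‖homDet u v‖) /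
          ((homNorm (crossRatio a b c u) * ‖homDet u b * homDet c a‖) *
            (homNorm (crossRatio a b c v) * ‖homDet v b * homDet c a‖))) := by
        refine mul_le_mul_of_nonneg_left (div_le_div_of_nonneg_left (by positivity)
          (mul_pos hu hv) (mul_le_mul ?_ ?_ hv.le (hu.le.trans ?_))) (by positivity)
        all_goals exact homNorm_crossRatio_mul_le ‹_› hca
    _ = _ := by
        rw [chordalDist_eq_homDet, homDet_crossRatio hub hvb hca]
        simp only [hD, norm_div, norm_mul]
        ring

end CrossRatio

section SphereCharts

@[simp] lemma finPart_coe (z : ℂ) : finPart z = z := rfl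

@[simp] lemma sphereInv_zero : sphereInv ((0 : ℂ) : OnePoint ℂ) = (∞ : OnePoint ℂ) :=
  if_pos rfl

lemma sphereInv_coe {z : ℂ} (hz : z ≠ 0) : sphereInv z = (z⁻¹ : ℂ) := if_neg hz

@[simp] lemma sphereInv_infty : sphereInv ∞ = (0 : ℂ) := rfl

@[simp] lemma sphereInv_sphereInv (u : OnePoint ℂ) : sphereInv (sphereInv u) = u := by
  induction u using OnePoint.rec with
  | infty => simp
  | coe z =>
    by_cases hz : z = 0
    · simp [hz]
    · rw [sphereInv_coe hz, sphereInv_coe (inv_ne_zero hz), inv_inv]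

@[simp] lemma sphereChart_infty (u : OnePoint ℂ) : sphereChart ∞ u = finPart (sphereInv u) := rfl

@[simp] lemma sphereChart_coe (z : ℂ) (u : OnePoint ℂ) : sphereChart z u = finPart u := rfl

@[simp] lemma sphereParam_infty (x : ℂ) : sphereParam ∞ x = sphereInv x := rfl

@[simp] lemma sphereParam_coe (z x : ℂ) : sphereParam z x = x := rfl

@[simp] lemma sphereCoord_infty : sphereCoord ∞ = 0 := rfl

@[simp] lemma sphereCoord_coe (z : ℂ) : sphereCoord z = z := rfl

lemma leftInverse_sphereChart_sphereParam (u : OnePoint ℂ) :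
    Function.LeftInverse (sphereChart u) (sphereParam u) := fun x => by
  induction u using OnePoint.rec <;> simp

@[simp] lemma sphereParam_sphereCoord (u : OnePoint ℂ) : sphereParam u (sphereCoord u) = u := by
  induction u using OnePoint.rec <;> simp

lemma sphereChart_self (u : OnePoint ℂ) : sphereChart u u = sphereCoord u := by
  induction u using OnePoint.rec <;> simp

lemma eventually_sphereParam_sphereChart (u : OnePoint ℂ) :
    ∀ᶠ v in 𝓝 u, sphereParam u (sphereChart u v) = v := by
  have hcoe {v : OnePoint ℂ} (hv : v ≠ (∞ : OnePoint ℂ)) : (finPart v : OnePoint ℂ) = v := by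
    obtain ⟨z, rfl⟩ := ne_infty_iff_exists.1 hv
    rfl
  induction u using OnePoint.rec with
  | infty =>
    filter_upwards [isOpen_compl_singleton.mem_nhds (infty_ne_coe (0 : ℂ))] with v hv
    have hne : sphereInv v ≠ (∞ : OnePoint ℂ) := fun h =>
      hv (by rw [← sphereInv_sphereInv v, h]; rfl)
    simp [hcoe hne]
  | coe z =>
    filter_upwards [isOpen_compl_singleton.mem_nhds (coe_ne_infty z)] with v hv
    simp [hcoe hv]

lemma continuousAt_sphereChart (u : OnePoint ℂ) : ContinuousAt (sphereChart u) u := by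
  induction u using OnePoint.rec with
  | infty =>
    rw [continuousAt_infty', coclosedCompact_eq_cocompact, ← Metric.cobounded_eq_cocompact,
      sphereChart_self, sphereCoord_infty]
    refine (tendsto_inv₀_cobounded (α := ℂ)).congr' ?_
    filter_upwards [(hasBasis_cobounded_norm (E := ℂ)).mem_of_mem (i := 1) trivial] with w hw
    have hw0 : w ≠ 0 := norm_pos_iff.1 (one_pos.trans_le hw)
    simp [sphereInv_coe hw0]
  | coe z => exact continuousAt_coe.2 continuousAt_id

lemma continuousAt_sphereParam (u : OnePoint ℂ) :
    ContinuousAt (sphereParam u) (sphereCoord u) := by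
  induction u using OnePoint.rec with
  | infty =>
    rw [sphereCoord_infty, continuousAt_iff_punctured_nhds, sphereParam_infty, sphereInv_zero]
    have htop : Tendsto (fun w : ℂ => (w : OnePoint ℂ)) (Bornology.cobounded ℂ)
        (𝓝 (∞ : OnePoint ℂ)) := by
      rw [Metric.cobounded_eq_cocompact, ← coclosedCompact_eq_cocompact]
      exact tendsto_coe_infty
    refine (htop.comp (tendsto_inv₀_nhdsNE_zero (α := ℂ))).congr' ?_
    filter_upwards [self_mem_nhdsWithin] with w hw
    exact (sphereInv_coe hw).symm
  | coe z => exact continuous_coe.continuousAt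

lemma analyticAt_crossRatio_sphereParam {a b c u : OnePoint ℂ} (hub : u ≠ b) (hca : c ≠ a) :
    AnalyticAt ℂ (fun x => crossRatio a b c (sphereParam u x)) (sphereCoord u) := by
  have hca : homDet c a ≠ 0 := by simpa [homDet_eq_zero_iff]
  have hub : homDet u b ≠ 0 := by simpa [homDet_eq_zero_iff]
  induction u using OnePoint.rec with
  | infty =>
    have hinv (x : ℂ) : crossRatio a b c (sphereParam ∞ x) =
        ((homDen a - homNum a * x) * homDet c b) / ((homDen b - homNum b * x) * homDet c a) := by
      rcases eq_or_ne x 0 with rfl | hx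
      · simp [crossRatio, homDet, homNum, homDen]
      · have hdet (v) : homDet (x⁻¹ : ℂ) v = x⁻¹ * (homDen v - homNum v * x) := by
          simp only [homDet, homNum, homDen, OnePoint.elim_some, id]
          field_simp
        rw [sphereParam_infty, sphereInv_coe hx, crossRatio, hdet, hdet, mul_assoc, mul_assoc,
          mul_div_mul_left _ _ (inv_ne_zero hx)]
    simp only [hinv]
    refine AnalyticAt.div (by fun_prop) (by fun_prop) (mul_ne_zero ?_ hca)
    simpa [homDet, homNum, homDen] using hub
  | coe z =>
    refine AnalyticAt.div ?_ ?_ (mul_ne_zero hub hca) <;>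
    · simp only [sphereParam_coe, homDet, homNum, homDen, OnePoint.elim_some, id]
      fun_prop

end SphereCharts

namespace SphereMeroAt

variable {h : ℂ → OnePoint ℂ} {z : ℂ}

lemma crossRatio_comp (hh : SphereMeroAt h z) {a b c : OnePoint ℂ} (hb : h z ≠ b)
    (hca : c ≠ a) : AnalyticAt ℂ (fun x => crossRatio a b c (h x)) z := by
  have hcr := analyticAt_crossRatio_sphereParam hb hca
  rw [← sphereChart_self] at hcr
  refine (hcr.comp_of_eq hh.2 rfl).congr ?_
  filter_upwards [hh.1.eventually (eventually_sphereParam_sphereChart _)] with x hx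
  simp only [Function.comp_apply, hx]

lemma congr {k : ℂ → OnePoint ℂ} (hh : SphereMeroAt h z) (hk : h =ᶠ[𝓝 z] k) :
    SphereMeroAt k z :=
  ⟨hh.1.congr hk, hh.2.congr (by filter_upwards [hk] with x hx; rw [hx, hk.self_of_nhds])⟩

lemma comp_sphereAnalyticAt {F : OnePoint ℂ → OnePoint ℂ} (hh : SphereMeroAt h z)
    (hF : SphereAnalyticAt F (h z)) : SphereMeroAt (fun x => F (h x)) z := by
  refine ⟨hF.1.comp hh.1, ?_⟩
  have hF := hF.2
  rw [← sphereChart_self] at hF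
  refine (hF.comp_of_eq hh.2 rfl).congr ?_
  filter_upwards [hh.1.eventually (eventually_sphereParam_sphereChart _)] with x hx
  simp only [Function.comp_apply, hx]

lemma comp_analyticAt {M : ℂ → ℂ} (hh : SphereMeroAt h (M z)) (hM : AnalyticAt ℂ M z) :
    SphereMeroAt (fun x => h (M x)) z :=
  ⟨ContinuousAt.comp (f := M) hh.1 hM.continuousAt, hh.2.comp hM⟩

end SphereMeroAt

section LocalInverse

lemma not_eventually_eq_of_injOn {X Y : Type*} [TopologicalSpace X] {x : X} [(𝓝[≠] x).NeBot]
    {f : X → Y} {B : Set X} (hB : B ∈ 𝓝 x) (hinj : InjOn f B) :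
    ¬∀ᶠ y in 𝓝 x, f y = f x := fun hconst => by
  obtain ⟨y, ⟨hy, hyB⟩, hyx⟩ := (((hconst.and hB).filter_mono nhdsWithin_le_nhds).and
    (self_mem_nhdsWithin (s := {x}ᶜ))).exists
  exact hyx (hinj hyB (mem_of_mem_nhds hB) hy)

lemma eq_one_of_injOn_pow {h : ℂ → ℂ} {h' x₀ : ℂ} (hh : HasStrictDerivAt h h' x₀) (hh' : h' ≠ 0)
    (h0 : h x₀ = 0) {n : ℕ} (hn : n ≠ 0) {B : Set ℂ} (hB : B ∈ 𝓝 x₀)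
    (hinj : InjOn (fun z => h z ^ n) B) : n = 1 := by
  have hζ := Complex.isPrimitiveRoot_exp n hn
  set ζ := Complex.exp (2 * Real.pi * Complex.I / n)
  have himg : h '' B ∈ 𝓝 0 := by
    have := image_mem_map (m := h) hB
    rwa [hh.map_nhds_eq hh', h0] at this
  have hmul : Tendsto (ζ * ·) (𝓝 0) (𝓝 0) := by
    simpa using (continuous_const_mul ζ).tendsto 0
  obtain ⟨w, ⟨⟨z₁, hz₁, rfl⟩, z₂, hz₂, hw⟩, hw0⟩ :=
    Filter.nonempty_of_mem (inter_mem (nhdsWithin_le_nhds (inter_mem himg (hmul himg)))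
      (self_mem_nhdsWithin (s := {0}ᶜ)))
  -- `h z₂ = ζ * h z₁` has the same `n`-th power as `h z₁`.
  have heq : z₂ = z₁ := hinj hz₂ hz₁ (by
    simp only [hw, mul_pow, hζ.pow_eq_one, one_mul])
  rw [heq, eq_comm, mul_eq_right₀ hw0] at hw
  rw [hw] at hζ
  exact hζ.unique IsPrimitiveRoot.one

lemma deriv_ne_zero_of_injOn {f : ℂ → ℂ} {x₀ : ℂ} {B : Set ℂ} (hf : AnalyticAt ℂ f x₀)
    (hB : B ∈ 𝓝 x₀) (hinj : InjOn f B) : deriv f x₀ ≠ 0 := by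
  obtain ⟨n, q, hq, hq0, hfq⟩ :=
    (hf.fun_sub (analyticAt_const (v := f x₀))).exists_eventuallyEq_pow_smul_nonzero_iff.2
      fun hconst => not_eventually_eq_of_injOn hB hinj (hconst.mono fun _ => sub_eq_zero.1)
  have hn : n ≠ 0 := by
    rintro rfl
    exact hq0 (by simpa using hfq.self_of_nhds.symm)
  obtain ⟨P, hP, hPq⟩ := exists_analyticAt_pow_eq hq hq0 hn
  set h : ℂ → ℂ := fun z => (z - x₀) * P z
  have hP0 : P x₀ ≠ 0 := fun h => hq0 (by rw [← hPq, h, zero_pow hn])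
  have hh : HasStrictDerivAt h (P x₀) x₀ := by
    simpa using HasStrictDerivAt.fun_mul ((hasStrictDerivAt_id x₀).sub_const x₀)
      hP.hasStrictDerivAt
  have hfh : ∀ᶠ z in 𝓝 x₀, f z = f x₀ + h z ^ n := by
    filter_upwards [hfq] with z hz
    rw [mul_pow, hPq, ← smul_eq_mul, ← hz, add_sub_cancel]
  obtain rfl : n = 1 :=
    eq_one_of_injOn_pow hh hP0 (by simp [h]) hn (inter_mem hB hfh) fun z₁ hz₁ z₂ hz₂ heq =>
      hinj hz₁.1 hz₂.1 (by rw [hz₁.2, hz₂.2]; exact congrArg _ heq)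
  have hf' : HasDerivAt f (P x₀) x₀ := (hh.hasDerivAt.const_add (f x₀)).congr_of_eventuallyEq
    (by filter_upwards [hfh] with z hz; simpa using hz)
  rwa [hf'.deriv]

lemma analyticAt_of_comp_of_deriv_ne_zero {f y : ℂ → ℂ} {z₀ : ℂ} (hf : AnalyticAt ℂ f (y z₀))
    (hf' : deriv f (y z₀) ≠ 0) (hy : ContinuousAt y z₀)
    (hfy : AnalyticAt ℂ (fun z => f (y z)) z₀) : AnalyticAt ℂ y z₀ := by
  refine ((hf.analyticAt_localInverse hf').comp_of_eq hfy rfl).congr ?_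
  exact hy.eventually (hf.hasStrictDerivAt.eventually_left_inverse hf')

lemma exists_injOn_sphereChart_comp {X : Type*} [TopologicalSpace X] {h : X → OnePoint ℂ} {x₀ : X}
    (hh : ContinuousAt h x₀) {B : Set X} (hB : B ∈ 𝓝 x₀) (hinj : InjOn h B) :
    ∃ B' ∈ 𝓝 x₀, InjOn (fun x => sphereChart (h x₀) (h x)) B' := by
  refine ⟨B ∩ {x | sphereParam (h x₀) (sphereChart (h x₀) (h x)) = h x},
    inter_mem hB (hh.eventually (eventually_sphereParam_sphereChart _)), fun x hx y hy hxy => ?_⟩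
  refine hinj hx.1 hy.1 ?_
  rw [← hx.2, ← hy.2]
  exact congrArg _ hxy

lemma SphereMeroAt.analyticAt_of_comp {π : ℂ → OnePoint ℂ} {y : ℂ → ℂ} {z : ℂ}
    (hπ : SphereMeroAt π (y z)) {N : Set ℂ} (hN : N ∈ 𝓝 (y z)) (hinj : InjOn π N)
    (hy : ContinuousAt y z) (hπy : SphereMeroAt (fun x => π (y x)) z) : AnalyticAt ℂ y z := by
  obtain ⟨B, hB, hinjB⟩ := exists_injOn_sphereChart_comp hπ.1 hN hinj
  exact analyticAt_of_comp_of_deriv_ne_zero hπ.2 (deriv_ne_zero_of_injOn hπ.2 hB hinjB) hy hπy.2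

lemma SphereAnalyticAt.sphereMeroAt_of_comp {F : OnePoint ℂ → OnePoint ℂ} {ψ : ℂ → OnePoint ℂ}
    {z : ℂ} (hF : SphereAnalyticAt F (ψ z)) {N : Set (OnePoint ℂ)} (hN : N ∈ 𝓝 (ψ z))
    (hinj : InjOn F N) (hψ : ContinuousAt ψ z) (hFψ : SphereMeroAt (fun x => F (ψ x)) z) :
    SphereMeroAt ψ z := by
  set u := ψ z
  set π : ℂ → OnePoint ℂ := fun x => F (sphereParam u x)
  have hparam := continuousAt_sphereParam u
  have hcoord : sphereChart u (ψ z) = sphereCoord u := sphereChart_self u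
  have hπ : SphereMeroAt π (sphereCoord u) := by
    refine ⟨ContinuousAt.comp (by simpa using hF.1) hparam, ?_⟩
    simpa [π] using hF.2
  have hψparam : ∀ᶠ x in 𝓝 z, sphereParam u (sphereChart u (ψ x)) = ψ x :=
    hψ.eventually (eventually_sphereParam_sphereChart u)
  have hπψ : SphereMeroAt (fun x => π (sphereChart u (ψ x))) z :=
    hFψ.congr (by filter_upwards [hψparam] with x hx; simp only [π, hx])
  refine ⟨hψ, SphereMeroAt.analyticAt_of_comp (hcoord ▸ hπ) (N := sphereParam u ⁻¹' N) ?_ ?_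
    (ContinuousAt.comp (g := sphereChart u) (continuousAt_sphereChart u) hψ) hπψ⟩
  · rw [hcoord]
    exact hparam.preimage_mem_nhds (by simpa using hN)
  · exact fun x hx y hy hxy =>
      (leftInverse_sphereChart_sphereParam u).injective (hinj hx hy hxy)

end LocalInverse

section Montel

lemma equicontinuousAt_of_differentiableOn {ι E : Type*} [NormedAddCommGroup E] [NormedSpace ℂ E]
    {g : ι → ℂ → E} {Ω : Set ℂ} (hΩ : IsOpen Ω) (hg : ∀ n, DifferentiableOn ℂ (g n) Ω) {c : E}
    {M : ℝ} (hM : ∀ n, MapsTo (g n) Ω (closedBall c M)) {x : ℂ} (hx : x ∈ Ω) :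
    EquicontinuousAt g x := by
  obtain ⟨R, hR, hRΩ⟩ := Metric.isOpen_iff.1 hΩ x hx
  refine Metric.equicontinuousAt_of_continuity_modulus (fun y => 2 * M / R * dist y x)
    (Continuous.tendsto' (by fun_prop) _ _ (by simp)) g ?_
  filter_upwards [ball_mem_nhds x hR] with y hy n
  rw [dist_comm]
  refine Complex.dist_le_div_mul_dist_of_mapsTo_ball ((hg n).mono hRΩ) (fun z hz => ?_) hy
  rw [two_mul]
  exact (dist_triangle_right _ _ c).trans (add_le_add (hM n (hRΩ hz)) (hM n hx))

lemma exists_tendstoLocallyUniformlyOn_ultrafilter {ι E : Type*} [NormedAddCommGroup E]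
    [NormedSpace ℂ E] [ProperSpace E] (l : Ultrafilter ι) {g : ι → ℂ → E} {Ω : Set ℂ}
    (hΩ : IsOpen Ω) (hg : ∀ n, DifferentiableOn ℂ (g n) Ω) {c : E} {M : ℝ}
    (hM : ∀ n, MapsTo (g n) Ω (closedBall c M)) :
    ∃ G : ℂ → E, TendstoLocallyUniformlyOn g G l Ω ∧ MapsTo G Ω (closedBall c M) := by
  have hlim : ∀ z ∈ Ω, ∃ y ∈ closedBall c M, Tendsto (g · z) l (𝓝 y) := fun z hz =>
    (isCompact_closedBall c M).ultrafilter_le_nhds (l.map (g · z))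
      (tendsto_principal.2 (Eventually.of_forall fun n => hM n hz))
  choose! G hG hlim using hlim
  refine ⟨G, (tendstoLocallyUniformlyOn_iff_forall_isCompact hΩ).2 fun K hKΩ hK => ?_, hG⟩
  have heq : EquicontinuousOn g K := fun x hx =>
    (equicontinuousAt_of_differentiableOn hΩ hg hM (hKΩ hx)).equicontinuousWithinAt K
  have := (EquicontinuousOn.tendsto_uniformOnFun_iff_pi' (𝔖 := {K}) (by simpa) (by simpa) l G).2
    (tendsto_pi_nhds.2 fun x => hlim x (hKΩ (by simpa using x.2)))
  exact UniformOnFun.tendsto_iff_tendstoUniformlyOn.1 this K rfl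

end Montel

section Hurwitz

lemma ball_subset_image_closedBall_of_le_norm_sub {g : ℂ → ℂ} {c : ℂ} {ρ ε : ℝ}
    (hg : DiffContOnCl ℂ g (ball c ρ)) (hρ : 0 < ρ) (hε : 0 < ε)
    (hsphere : ∀ z ∈ sphere c ρ, ε ≤ ‖g z - g c‖) :
    ball (g c) (ε / 2) ⊆ g '' closedBall c ρ := by
  refine hg.ball_subset_image_closedBall hρ hsphere fun hconst => ?_
  obtain ⟨z, hz⟩ := NormedSpace.sphere_nonempty (x := c).2 hρ.le
  have hball : EqOn g (fun _ => g c) (ball c ρ) :=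
    (hg.differentiableOn.analyticOnNhd isOpen_ball).eqOn_of_preconnected_of_eventuallyEq
      analyticOnNhd_const (convex_ball c ρ).isPreconnected (mem_ball_self hρ)
      (hconst.mono fun _ => not_not.1)
  have hcl := hball.of_subset_closure hg.continuousOn continuousOn_const subset_closure subset_rfl
  have hzc : g z = g c := hcl (by
    rw [closure_ball c hρ.ne']
    exact sphere_subset_closedBall hz)
  simpa [hzc, hε.not_ge] using hsphere z hz

lemma exists_sphere_le_norm_sub {G : ℂ → ℂ} {Ω : Set ℂ} (hΩ : IsOpen Ω)
    (hG : DifferentiableOn ℂ G Ω) {b : ℂ} (hb : b ∈ Ω) (hconst : ¬∀ᶠ z in 𝓝 b, G z = G b) :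
    ∃ ρ > 0, closedBall b ρ ⊆ Ω ∧ ∃ δ > 0, ∀ z ∈ sphere b ρ, δ ≤ ‖G z - G b‖ := by
  have hne : ∀ᶠ z in 𝓝[≠] b, G z ≠ G b :=
    ((hG.analyticAt (hΩ.mem_nhds hb)).eventually_eq_or_eventually_ne
      analyticAt_const).resolve_left hconst
  obtain ⟨ρ, hρ, hρs⟩ := Metric.nhds_basis_closedBall.eventually_iff.1
    ((eventually_nhdsWithin_iff.1 hne).and (hΩ.mem_nhds hb))
  have hρΩ : closedBall b ρ ⊆ Ω := fun z hz => (hρs hz).2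
  have hcont : ContinuousOn (fun z => ‖G z - G b‖) (sphere b ρ) :=
    ((hG.continuousOn.mono (sphere_subset_closedBall.trans hρΩ)).sub continuousOn_const).norm
  obtain ⟨z₁, hz₁, hmin⟩ := (isCompact_sphere b ρ).exists_isMinOn
    (NormedSpace.sphere_nonempty.2 hρ.le) hcont
  refine ⟨ρ, hρ, hρΩ, _, norm_sub_pos_iff.2 ?_, hmin⟩
  exact (hρs (sphere_subset_closedBall hz₁)).1 (ne_of_mem_sphere hz₁ hρ.ne')

lemma eventually_ball_subset_image_of_tendstoLocallyUniformlyOn {ι : Type*} {l : Filter ι}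
    [l.NeBot] {g : ι → ℂ → ℂ} {G : ℂ → ℂ} {Ω : Set ℂ} (hΩ : IsOpen Ω)
    (hg : ∀ᶠ n in l, DifferentiableOn ℂ (g n) Ω) (hgG : TendstoLocallyUniformlyOn g G l Ω) {b : ℂ}
    (hb : b ∈ Ω) (hconst : ¬∀ᶠ z in 𝓝 b, G z = G b) :
    ∃ ε > 0, ∀ᶠ n in l, ball (G b) ε ⊆ g n '' Ω := by
  obtain ⟨ρ, hρ, hρΩ, δ, hδ, hsphere⟩ :=
    exists_sphere_le_norm_sub hΩ (hgG.differentiableOn hg hΩ) hb hconst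
  have hunif := Metric.tendstoUniformlyOn_iff.1 ((tendstoLocallyUniformlyOn_iff_forall_isCompact
    hΩ).1 hgG _ hρΩ (isCompact_closedBall b ρ)) (δ / 8) (by positivity)
  refine ⟨δ / 8, by positivity, ?_⟩
  filter_upwards [hunif, hg] with n hn hgn
  have hbn := hn b (mem_closedBall_self hρ.le)
  have hlow : ∀ z ∈ sphere b ρ, δ / 2 ≤ ‖g n z - g n b‖ := fun z hz => by
    have hzn := hn z (sphere_subset_closedBall hz)
    have hz := hsphere z hz
    rw [← dist_eq_norm] at hz ⊢
    have := dist_triangle4 (G z) (g n z) (g n b) (G b)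
    rw [dist_comm (g n b) (G b)] at this
    linarith
  calc ball (G b) (δ / 8) ⊆ ball (g n b) (δ / 2 / 2) := ball_subset_ball' (by linarith)
    _ ⊆ g n '' closedBall b ρ := ball_subset_image_closedBall_of_le_norm_sub
      ((hgn.mono hρΩ).diffContOnCl_ball subset_rfl) hρ (half_pos hδ) hlow
    _ ⊆ g n '' Ω := image_mono hρΩ

end Hurwitz

section DiscSelfMaps

lemma mapsTo_ball_of_mapsTo_closedBall {G : ℂ → ℂ} {Ω : Set ℂ} (hΩ : IsOpen Ω)
    (hconn : IsPreconnected Ω) (hG : DifferentiableOn ℂ G Ω) {M : ℝ}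
    (hm : MapsTo G Ω (closedBall 0 M)) {z₀ : ℂ} (hz₀ : z₀ ∈ Ω) (h : G z₀ ∈ ball (0 : ℂ) M) :
    MapsTo G Ω (ball 0 M) := by
  intro z hz
  simp only [mem_ball_zero_iff] at h ⊢
  refine lt_of_le_of_ne (mem_closedBall_zero_iff.1 (hm hz)) fun heq => h.ne ?_
  have hmax : IsMaxOn (norm ∘ G) Ω z := fun w hw => by
    simpa [heq] using hm hw
  simpa [heq] using Complex.norm_eqOn_of_isPreconnected_of_isMaxOn hconn hΩ hG hz hmax hz₀

lemma exists_tendsto_eventually_ball_subset_image {ι : Type*} (l : Ultrafilter ι) {g : ι → ℂ → ℂ}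
    {a : ℂ} (hg : ∀ n, DifferentiableOn ℂ (g n) (ball 0 1))
    (hm : ∀ n, MapsTo (g n) (ball 0 1) (ball 0 1)) (h0 : ∀ n, g n 0 = a) {b : ι → ℂ} {r : ℝ}
    (hr : r < 1) (hb : ∀ n, ‖b n‖ ≤ r) :
    ∃ p ∈ ball (0 : ℂ) 1, Tendsto (fun n => g n (b n)) l (𝓝 p) ∧
      (p ≠ a → ∃ ε > 0, ∀ᶠ n in l, ball p ε ⊆ g n '' ball 0 1) := by
  have h0mem : (0 : ℂ) ∈ ball (0 : ℂ) 1 := mem_ball_self one_pos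
  have hconn : IsPreconnected (ball (0 : ℂ) 1) := (convex_ball 0 1).isPreconnected
  obtain ⟨G, hgG, hGm⟩ := exists_tendstoLocallyUniformlyOn_ultrafilter l isOpen_ball hg
    fun n => (hm n).mono_right ball_subset_closedBall
  have hG : DifferentiableOn ℂ G (ball 0 1) :=
    hgG.differentiableOn (Eventually.of_forall hg) isOpen_ball
  have hG0 : G 0 = a := tendsto_nhds_unique (hgG.tendsto_at h0mem) (by simp [h0])
  have ha : a ∈ ball (0 : ℂ) 1 := by
    obtain ⟨n⟩ := l.neBot.nonempty
    exact h0 n ▸ hm n h0mem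
  obtain ⟨b', hb', hbl⟩ := (isCompact_closedBall (0 : ℂ) r).ultrafilter_le_nhds (l.map b)
    (tendsto_principal.2 (Eventually.of_forall fun n => by simpa using hb n))
  have hball : closedBall (0 : ℂ) r ⊆ ball 0 1 := closedBall_subset_ball hr
  refine ⟨G b', mapsTo_ball_of_mapsTo_closedBall isOpen_ball hconn hG hGm h0mem (hG0 ▸ ha)
    (hball hb'), hgG.tendsto_comp (hG.continuousOn b' (hball hb')) (hball hb')
    (tendsto_nhdsWithin_iff.2 ⟨hbl, Eventually.of_forall fun n => hball (by simpa using hb n)⟩),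
    fun hpa => eventually_ball_subset_image_of_tendstoLocallyUniformlyOn isOpen_ball
      (Eventually.of_forall hg) hgG (hball hb') fun hconst => hpa ?_⟩
  rw [← hG0]
  exact ((hG.analyticOnNhd isOpen_ball).eqOn_of_preconnected_of_eventuallyEq
    analyticOnNhd_const hconn (hball hb') hconst h0mem).symm

end DiscSelfMaps

/-- The map `f` sends `A` into `B`, and `f : A → B` is a covering map; this is the form in which
singular sets and holomorphic disc coverings refer to coverings. -/
def RestrictsToCovering {X Y : Type*} [TopologicalSpace X] [TopologicalSpace Y] (f : X → Y)
    (A : Set X) (B : Set Y) : Prop :=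
  ∃ h : MapsTo f A B, IsCoveringMap (h.restrict f A B)

namespace RestrictsToCovering

variable {X Y : Type*} [TopologicalSpace X] [TopologicalSpace Y] {f : X → Y} {A : Set X}
  {B : Set Y}

lemma exists_injOn (hf : RestrictsToCovering f A B) (hA : IsOpen A) {a : X} (ha : a ∈ A) :
    ∃ N ∈ 𝓝 a, InjOn f N := by
  obtain ⟨h, hc⟩ := hf
  obtain ⟨W, hW, haW, hinj⟩ := hc.isLocalHomeomorph.isLocallyInjective ⟨a, ha⟩
  refine ⟨Subtype.val '' W, (hA.isOpenMap_subtype_val W hW).mem_nhds ⟨_, haW, rfl⟩, ?_⟩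
  rintro _ ⟨x, hx, rfl⟩ _ ⟨y, hy, rfl⟩ hxy
  exact congrArg _ (hinj hx hy (Subtype.ext hxy))

lemma nhds_le_map (hf : RestrictsToCovering f A B) (hB : IsOpen B) {a : X} (ha : a ∈ A) :
    𝓝 (f a) ≤ map f (𝓝 a) := by
  obtain ⟨h, hc⟩ := hf
  calc 𝓝 (f a) = map Subtype.val (𝓝 (⟨f a, h ha⟩ : B)) :=
        (map_nhds_subtype_coe_eq_nhds (h ha) (hB.mem_nhds (h ha))).symm
    _ ≤ map Subtype.val (map (h.restrict f A B) (𝓝 ⟨a, ha⟩)) :=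
        map_mono (hc.isOpenMap.nhds_le ⟨a, ha⟩)
    _ = map f (map Subtype.val (𝓝 ⟨a, ha⟩)) := rfl
    _ ≤ map f (𝓝 a) := map_mono continuous_subtype_val.continuousAt

lemma exists_lift (hf : RestrictsToCovering f A B) {E : Type*} [NormedAddCommGroup E]
    [NormedSpace ℝ E] {K : Set E} (hK : IsOpen K) (hconv : Convex ℝ K) {φ : E → Y}
    (hφ : ContinuousOn φ K) (hφB : MapsTo φ K B) {x₀ : E} (hx₀ : x₀ ∈ K) {a : X} (ha : a ∈ A)
    (hfa : f a = φ x₀) :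
    ∃ ψ : E → X, ContinuousOn ψ K ∧ MapsTo ψ K A ∧ ψ x₀ = a ∧ ∀ z ∈ K, f (ψ z) = φ z := by
  obtain ⟨h, hc⟩ := hf
  have : LocallyPathConnectedSpace K := hK.locallyPathConnectedSpace
  have : ContractibleSpace K := hconv.contractibleSpace ⟨x₀, hx₀⟩
  obtain ⟨L, ⟨hL₀, hL⟩, -⟩ := hc.existsUnique_continuousMap_lifts
    ⟨hφB.restrict φ K B, hφ.mapsToRestrict hφB⟩ ⟨x₀, hx₀⟩ ⟨a, ha⟩ (Subtype.ext hfa)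
  obtain ⟨ψ, hψ⟩ : ∃ ψ : E → X, ∀ z : K, ψ z = L z := by
    classical exact ⟨fun z => if hz : z ∈ K then L ⟨z, hz⟩ else a, fun z => dif_pos z.2⟩
  refine ⟨ψ, ?_, fun z hz => ?_, ?_, fun z hz => ?_⟩
  · exact continuousOn_iff_continuous_domRestrict.2
      ((continuous_subtype_val.comp L.continuous).congr fun z => (hψ z).symm)
  · exact hψ ⟨z, hz⟩ ▸ (L ⟨z, hz⟩).2
  · rw [hψ ⟨x₀, hx₀⟩, hL₀]
  · rw [hψ ⟨z, hz⟩]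
    exact congrArg Subtype.val (congrFun hL ⟨z, hz⟩)

lemma inter_preimage (hf : RestrictsToCovering f A B) {C : Set Y} (hC : C ⊆ B) :
    RestrictsToCovering f (A ∩ f ⁻¹' C) C := by
  obtain ⟨h, hc⟩ := hf
  set D : Set B := Subtype.val ⁻¹' C
  let source : ↥(A ∩ f ⁻¹' C) ≃ₜ ↥(h.restrict f A B ⁻¹' D) :=
    { toFun := fun x => ⟨⟨x, x.2.1⟩, x.2.2⟩
      invFun := fun x => ⟨x, x.1.2, x.2⟩
      continuous_toFun := by fun_prop
      continuous_invFun := by fun_prop }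
  let target : ↥D ≃ₜ ↥C :=
    { toFun := fun y => ⟨y, y.2⟩
      invFun := fun y => ⟨⟨y, hC y.2⟩, y.2⟩
      continuous_toFun := by fun_prop
      continuous_invFun := by fun_prop }
  exact ⟨fun x hx => hx.2, ((hc.restrictPreimage D).comp_homeomorph source).homeomorph_comp target⟩

end RestrictsToCovering

section LocalImages

lemma SphereMeroAt.nhds_le_map {h : ℂ → OnePoint ℂ} {z : ℂ} (hh : SphereMeroAt h z) {N : Set ℂ}
    (hN : N ∈ 𝓝 z) (hinj : InjOn h N) : 𝓝 (h z) ≤ map h (𝓝 z) := by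
  obtain ⟨B, hB, hBinj⟩ := exists_injOn_sphereChart_comp hh.1 hN hinj
  calc 𝓝 (h z)
      = map (sphereParam (h z)) (map (sphereChart (h z)) (𝓝 (h z))) := by
        conv_lhs => rw [← Filter.map_id (f := 𝓝 (h z))]
        rw [Filter.map_map]
        exact (Filter.map_congr (eventually_sphereParam_sphereChart (h z))).symm
    _ ≤ map (sphereParam (h z)) (𝓝 (sphereChart (h z) (h z))) :=
        map_mono (continuousAt_sphereChart (h z))
    _ ≤ map (sphereParam (h z)) (map (fun x => sphereChart (h z) (h x)) (𝓝 z)) :=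
        map_mono (hh.2.eventually_constant_or_nhds_le_map_nhds.resolve_left
          (not_eventually_eq_of_injOn hB hBinj))
    _ = map h (𝓝 z) := by
        rw [Filter.map_map]
        exact Filter.map_congr (hh.1.eventually (eventually_sphereParam_sphereChart (h z)))

/-- `φ` restricts to a holomorphic map from the open unit disc into `U ⊆ Ĉ`. -/
def IsHolomorphicDisc (φ : ℂ → OnePoint ℂ) (U : Set (OnePoint ℂ)) : Prop :=
  (∀ z ∈ ball (0 : ℂ) 1, SphereMeroAt φ z) ∧ MapsTo φ (ball 0 1) U

lemma IsHolomorphicDisc.mono {φ : ℂ → OnePoint ℂ} {U U' : Set (OnePoint ℂ)}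
    (hφ : IsHolomorphicDisc φ U) (h : U ⊆ U') : IsHolomorphicDisc φ U' :=
  ⟨hφ.1, hφ.2.mono_right h⟩

lemma IsHolomorphicDisc.continuousOn {φ : ℂ → OnePoint ℂ} {U : Set (OnePoint ℂ)}
    (hφ : IsHolomorphicDisc φ U) : ContinuousOn φ (ball 0 1) := fun z hz =>
  (hφ.1 z hz).1.continuousWithinAt

lemma IsHolomorphicDisc.connectedComponentIn {φ : ℂ → OnePoint ℂ} {U : Set (OnePoint ℂ)}
    (hφ : IsHolomorphicDisc φ U) : IsHolomorphicDisc φ (connectedComponentIn U (φ 0)) :=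
  ⟨hφ.1, mapsTo_iff_image_subset.2 <|
    ((convex_ball (0 : ℂ) 1).isPreconnected.image φ hφ.continuousOn).subset_connectedComponentIn
      (mem_image_of_mem φ (mem_ball_self one_pos)) hφ.2.image_subset⟩

variable {π : ℂ → OnePoint ℂ} {D : Set (OnePoint ℂ)}

lemma SphereDiscCovering.restrictsToCovering (hπ : SphereDiscCovering π D) :
    RestrictsToCovering π (ball 0 1) D := hπ.2.2

lemma SphereDiscCovering.nhds_le_map (hπ : SphereDiscCovering π D) {a : ℂ}
    (ha : a ∈ ball (0 : ℂ) 1) : 𝓝 (π a) ≤ map π (𝓝 a) := by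
  obtain ⟨N, hN, hinj⟩ := hπ.restrictsToCovering.exists_injOn isOpen_ball ha
  exact (hπ.1 a ha).nhds_le_map hN hinj

lemma SphereDiscCovering.exists_lift (hπ : SphereDiscCovering π D) {φ : ℂ → OnePoint ℂ}
    (hφ : IsHolomorphicDisc φ D) {a : ℂ} (ha : a ∈ ball (0 : ℂ) 1) (hπa : π a = φ 0) :
    ∃ g : ℂ → ℂ, DifferentiableOn ℂ g (ball 0 1) ∧ MapsTo g (ball 0 1) (ball 0 1) ∧ g 0 = a ∧
      ∀ z ∈ ball 0 1, π (g z) = φ z := by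
  obtain ⟨g, hgc, hgm, hg0, hg⟩ := hπ.restrictsToCovering.exists_lift isOpen_ball
    (convex_ball (0 : ℂ) 1) hφ.continuousOn hφ.2 (mem_ball_self one_pos) ha hπa
  refine ⟨g, fun z hz => ?_, hgm, hg0, hg⟩
  obtain ⟨N, hN, hinj⟩ := hπ.restrictsToCovering.exists_injOn isOpen_ball (hgm hz)
  have hφg : φ =ᶠ[𝓝 z] fun x => π (g x) :=
    (isOpen_ball.eventually_mem hz).mono fun x hx => (hg x hx).symm
  exact ((hπ.1 _ (hgm hz)).analyticAt_of_comp hN hinj (hgc.continuousAt (isOpen_ball.mem_nhds hz))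
    ((hφ.1 z hz).congr hφg)).differentiableAt.differentiableWithinAt

end LocalImages

section Dynamics

/-- The map `F`, holomorphic on the open set `V`, restricts to a covering of the open set `U` by
the part of its preimage in `V`, and this preimage lies in `U`. This is how a holomorphic map
relates to the complement of its postsingular set. -/
structure IsBackwardCovering (F : OnePoint ℂ → OnePoint ℂ) (V U : Set (OnePoint ℂ)) : Prop where
  isOpen_domain : IsOpen V
  analyticAt : ∀ u ∈ V, SphereAnalyticAt F u
  isOpen : IsOpen U
  covering : RestrictsToCovering F (V ∩ F ⁻¹' U) U
  preimage_subset : V ∩ F ⁻¹' U ⊆ U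

variable {F : OnePoint ℂ → OnePoint ℂ} {V U : Set (OnePoint ℂ)} {w : OnePoint ℂ}

lemma isOpen_sphereFatou (F : OnePoint ℂ → OnePoint ℂ) (V : Set (OnePoint ℂ)) :
    IsOpen (SphereFatou F V) :=
  isOpen_iff_mem_nhds.2 fun _ ⟨N, hN, huN, h⟩ =>
    mem_of_superset (hN.mem_nhds huN) fun _ hv => ⟨N, hN, hv, h⟩

lemma SphereFatou.apply_mem {W : Set (OnePoint ℂ)} (hW : IsOpen W)
    (hopen : ∀ x ∈ W, 𝓝 (F x) ≤ map F (𝓝 x)) {u : OnePoint ℂ} (huW : u ∈ W) (huV : u ∈ V)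
    (hu : u ∈ SphereFatou F V) : F u ∈ SphereFatou F V := by
  obtain ⟨N, hN, huN, h⟩ := hu
  have himage : ∀ k, F^[k] '' (F '' (N ∩ W)) ⊆ F^[k + 1] '' N := by
    rintro k _ ⟨_, ⟨x, hx, rfl⟩, rfl⟩
    exact ⟨x, hx.1, Function.iterate_succ_apply F k x⟩
  refine ⟨F '' (N ∩ W), isOpen_iff_mem_nhds.2 ?_, ⟨u, ⟨huN, huW⟩, rfl⟩, ?_⟩
  · rintro _ ⟨x, hx, rfl⟩
    exact hopen x hx.2 (image_mem_map ((hN.inter hW).mem_nhds hx))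
  rcases h with ⟨hNV, hequi⟩ | ⟨n, hNV, hNcl⟩
  · refine Or.inl ⟨fun k => (himage k).trans (hNV (k + 1)), ?_⟩
    rintro _ ⟨x, hx, rfl⟩ ε hε
    obtain ⟨δ, hδ, hxδ⟩ := hequi x hx.1 ε hε
    obtain ⟨δ', hδ', hsub⟩ := (nhds_basis_chordalDist (F x)).mem_iff.1 <|
      hopen x hx.2 <| image_mem_map <|
        inter_mem (hN.mem_nhds hx.1) ((nhds_basis_chordalDist x).mem_of_mem hδ)
    refine ⟨δ', hδ', fun v _ hv k => ?_⟩
    obtain ⟨y, ⟨hyN, hy⟩, rfl⟩ := hsub hv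
    exact hxδ y hyN hy (k + 1)
  · rcases n with _ | n
    · exact absurd (subset_closure huV) (hNcl ⟨u, huN, rfl⟩)
    · exact Or.inr ⟨n, fun k hk => (himage k).trans (hNV (k + 1) (by lia)),
        (himage n).trans hNcl⟩

lemma SphereMeroAt.iterate_comp (hF : ∀ u ∈ V, SphereAnalyticAt F u) {h : ℂ → OnePoint ℂ} {z : ℂ}
    (hh : SphereMeroAt h z) (k : ℕ) (hk : ∀ j < k, F^[j] (h z) ∈ V) :
    SphereMeroAt (fun x => F^[k] (h x)) z := by
  induction k with
  | zero => exact hh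
  | succ k ih =>
    simp only [Function.iterate_succ_apply']
    exact (ih fun j hj => hk j (by lia)).comp_sphereAnalyticAt (hF _ (hk k (Nat.lt_succ_self k)))

lemma exists_chordalDist_le_mul_dist_of_omits {P : Set (OnePoint ℂ)}
    (hthree : ∃ a b c : OnePoint ℂ, a ∈ P ∧ b ∈ P ∧ c ∈ P ∧ a ≠ b ∧ a ≠ c ∧ b ≠ c)
    {ι : Type*} {g : ι → ℂ → OnePoint ℂ} {z : ℂ} {R : ℝ} (hR : 0 < R)
    (hg : ∀ i, ∀ x ∈ ball z R, SphereMeroAt (g i) x) (hP : ∀ i, ∀ x ∈ ball z R, g i x ∉ P) :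
    ∃ K, ∀ i, ∀ y ∈ ball z (R / 2), chordalDist (g i z) (g i y) ≤ K * dist z y := by
  obtain ⟨a, b, c, ha, hb, hc, hab, hac, hbc⟩ := hthree
  obtain ⟨K, hK, hcross⟩ := exists_chordalDist_le_mul_crossRatio hab hac.symm hbc.symm
  have hne : ∀ i, ∀ x ∈ ball z R, ∀ q ∈ P, g i x ≠ q := fun i x hx q hq h => hP i x hx (h ▸ hq)
  refine ⟨K * (3456 / R), fun i y hy => ?_⟩
  have hyR : y ∈ ball z R := ball_subset_ball (by linarith) hy
  calc chordalDist (g i z) (g i y)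
      ≤ K * chordalDist (crossRatio a b c (g i z)) (crossRatio a b c (g i y)) :=
        hcross _ _ (hne i z (mem_ball_self hR) b hb) (hne i y hyR b hb)
    _ ≤ K * (3456 / R * dist z y) := by
        gcongr
        refine chordalDist_le_of_omits_zero_one (g := fun x => crossRatio a b c (g i x)) hR
          (fun x hx => ?_) (fun x hx => ?_) (fun x hx => ?_) (mem_ball_self (half_pos hR)) hy
        · exact ((hg i x hx).crossRatio_comp
            (hne i x hx b hb) hac.symm).differentiableAt.differentiableWithinAt
        · exact crossRatio_ne_zero (hne i x hx a ha) (hne i x hx b hb) hac.symm hbc.symm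
        · exact crossRatio_ne_one (hne i x hx b hb) (hne i x hx c hc) hab hac.symm
    _ = K * (3456 / R) * dist z y := by ring

lemma SphereFatou.mem_of_orbit (hF : ∀ u ∈ V, SphereAnalyticAt F u) {P : Set (OnePoint ℂ)}
    (hthree : ∃ a b c : OnePoint ℂ, a ∈ P ∧ b ∈ P ∧ c ∈ P ∧ a ≠ b ∧ a ≠ c ∧ b ≠ c)
    {h : ℂ → OnePoint ℂ} {O : Set ℂ} (hO : IsOpen O) (hh : ∀ z ∈ O, SphereMeroAt h z)
    (hopen : ∀ z ∈ O, 𝓝 (h z) ≤ map h (𝓝 z)) (hV : ∀ z ∈ O, ∀ k, F^[k] (h z) ∈ V)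
    (hP : ∀ z ∈ O, ∀ k, F^[k] (h z) ∉ P) {p : ℂ} (hp : p ∈ O) : h p ∈ SphereFatou F V := by
  refine ⟨h '' O, isOpen_iff_mem_nhds.2 ?_, ⟨p, hp, rfl⟩, Or.inl ⟨?_, ?_⟩⟩
  · rintro _ ⟨z, hz, rfl⟩
    exact hopen z hz (image_mem_map (hO.mem_nhds hz))
  · rintro k _ ⟨_, ⟨z, hz, rfl⟩, rfl⟩
    exact hV z hz k
  rintro _ ⟨z, hz, rfl⟩ ε hε
  obtain ⟨R, hR, hRO⟩ := Metric.isOpen_iff.1 hO z hz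
  obtain ⟨K, hK⟩ := exists_chordalDist_le_mul_dist_of_omits hthree hR
    (g := fun k x => F^[k] (h x))
    (fun k x hx => (hh x (hRO hx)).iterate_comp hF k fun j _ => hV x (hRO hx) j)
    (fun k x hx => hP x (hRO hx) k)
  have hsmall : ∀ᶠ y in 𝓝 z, K * dist z y < ε :=
    (by fun_prop : ContinuousAt (fun y => K * dist z y) z).eventually_lt continuousAt_const
      (by simpa using hε)
  obtain ⟨δ, hδ, hδsub⟩ := (nhds_basis_chordalDist (h z)).mem_iff.1 <|
    hopen z hz <| image_mem_map <| inter_mem (ball_mem_nhds z (half_pos hR)) hsmall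
  refine ⟨δ, hδ, fun v _ hv k => ?_⟩
  obtain ⟨y, ⟨hyR, hy⟩, rfl⟩ := hδsub hv
  exact (hK k y hyR).trans_lt hy

namespace IsBackwardCovering

lemma isOpen_preimage (hF : IsBackwardCovering F V U) : IsOpen (V ∩ F ⁻¹' U) :=
  ContinuousOn.isOpen_inter_preimage (fun u hu => (hF.analyticAt u hu).1.continuousWithinAt)
    hF.isOpen_domain hF.isOpen

lemma iterate_mem_sphereFatou (hF : IsBackwardCovering F V U) {x : OnePoint ℂ} (k : ℕ)
    (hx : ∀ j < k, F^[j] x ∈ V ∩ F ⁻¹' U) (hfatou : x ∈ SphereFatou F V) :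
    F^[k] x ∈ SphereFatou F V := by
  induction k with
  | zero => exact hfatou
  | succ k ih =>
    rw [Function.iterate_succ_apply']
    have hk := hx k (Nat.lt_succ_self k)
    exact SphereFatou.apply_mem hF.isOpen_preimage
      (fun y hy => hF.covering.nhds_le_map hF.isOpen hy) hk hk.1 (ih fun j hj => hx j (by lia))

lemma exists_lift (hF : IsBackwardCovering F V U) {φ : ℂ → OnePoint ℂ}
    (hφ : IsHolomorphicDisc φ U) {x : OnePoint ℂ} (hx : x ∈ V) (hφ0 : φ 0 = F x) :
    ∃ ψ, IsHolomorphicDisc ψ (V ∩ F ⁻¹' U) ∧ ψ 0 = x ∧ ∀ z ∈ ball (0 : ℂ) 1, F (ψ z) = φ z := by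
  have h0 : (0 : ℂ) ∈ ball (0 : ℂ) 1 := mem_ball_self one_pos
  obtain ⟨ψ, hψc, hψm, hψ0, hψ⟩ := hF.covering.exists_lift isOpen_ball (convex_ball (0 : ℂ) 1)
    hφ.continuousOn hφ.2 h0 ⟨hx, mem_preimage.2 (hφ0 ▸ hφ.2 h0)⟩ hφ0.symm
  refine ⟨ψ, ⟨fun z hz => ?_, hψm⟩, hψ0, hψ⟩
  obtain ⟨N, hN, hinj⟩ := hF.covering.exists_injOn hF.isOpen_preimage (hψm hz)
  have hφψ : φ =ᶠ[𝓝 z] fun x => F (ψ x) :=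
    (isOpen_ball.eventually_mem hz).mono fun x hx => (hψ x hx).symm
  exact (hF.analyticAt _ (hψm hz).1).sphereMeroAt_of_comp hN hinj
    (hψc.continuousAt (isOpen_ball.mem_nhds hz)) ((hφ.1 z hz).congr hφψ)

lemma exists_lift_iterate (hF : IsBackwardCovering F V U) {φ : ℂ → OnePoint ℂ}
    (hφ : IsHolomorphicDisc φ U) (k : ℕ) {x : OnePoint ℂ} (hx : ∀ j < k, F^[j] x ∈ V)
    (hφ0 : φ 0 = F^[k] x) :
    ∃ ψ, IsHolomorphicDisc ψ U ∧ ψ 0 = x ∧ ∀ z ∈ ball (0 : ℂ) 1,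
      (∀ j < k, F^[j] (ψ z) ∈ V ∩ F ⁻¹' U) ∧ F^[k] (ψ z) = φ z := by
  induction k generalizing x with
  | zero => exact ⟨φ, hφ, hφ0, fun z _ => ⟨fun j hj => absurd hj (Nat.not_lt_zero j), rfl⟩⟩
  | succ k ih =>
    obtain ⟨ψ₁, hψ₁, hψ₁0, horbit⟩ := ih (x := F x) (fun j hj => hx (j + 1) (by lia)) hφ0
    obtain ⟨ψ, hψ, hψ0, hFψ⟩ := hF.exists_lift hψ₁ (hx 0 k.succ_pos) hψ₁0
    refine ⟨ψ, hψ.mono hF.preimage_subset, hψ0, fun z hz => ⟨?_, ?_⟩⟩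
    · rintro (_ | j) hj
      · exact hψ.2 hz
      · rw [Function.iterate_succ_apply, hFψ z hz]
        exact (horbit z hz).1 j (by lia)
    · rw [Function.iterate_succ_apply, hFψ z hz]
      exact (horbit z hz).2

lemma exists_selfMap (hF : IsBackwardCovering F V U) {π : ℂ → OnePoint ℂ}
    (hπ : SphereDiscCovering π (connectedComponentIn U w)) {a : ℂ} (ha : a ∈ ball (0 : ℂ) 1)
    (hπa : π a = w) {n : ℕ} (hw : ∀ j < n, F^[j] w ∈ V) {φ : ℂ → OnePoint ℂ}
    (hφ : IsHolomorphicDisc φ U) (hφ0 : φ 0 = F^[n] w) :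
    ∃ g : ℂ → ℂ, DifferentiableOn ℂ g (ball 0 1) ∧ MapsTo g (ball 0 1) (ball 0 1) ∧ g 0 = a ∧
      ∀ z ∈ ball (0 : ℂ) 1,
        (∀ j < n, F^[j] (π (g z)) ∈ V ∩ F ⁻¹' U) ∧ F^[n] (π (g z)) = φ z := by
  obtain ⟨ψ, hψ, hψ0, horbit⟩ := hF.exists_lift_iterate hφ n hw hφ0
  obtain ⟨g, hg, hgm, hg0, hπg⟩ :=
    hπ.exists_lift (hψ0 ▸ hψ.connectedComponentIn) ha (hπa.trans hψ0.symm)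
  exact ⟨g, hg, hgm, hg0, fun z hz => by rw [hπg z hz]; exact horbit z hz⟩

lemma eventually_disc_mem_sphereFatou (hF : IsBackwardCovering F V U)
    (hthree : ∃ a b c : OnePoint ℂ, a ∈ Uᶜ ∧ b ∈ Uᶜ ∧ c ∈ Uᶜ ∧ a ≠ b ∧ a ≠ c ∧ b ≠ c)
    (hw : w ∈ SphereFatou F V) (hwV : ∀ n, F^[n] w ∈ V) {π : ℂ → OnePoint ℂ}
    (hπ : SphereDiscCovering π (connectedComponentIn U w)) {a : ℂ} (ha : a ∈ ball (0 : ℂ) 1)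
    (hπa : π a = w) {r : ℝ} (hr : r < 1) :
    ∀ᶠ n in atTop, ∀ φ, IsHolomorphicDisc φ U → φ 0 = F^[n] w →
      ∀ b : ℂ, ‖b‖ ≤ r → φ b ∈ SphereFatou F V := by
  by_contra hcontra
  obtain ⟨m, hm, hbad⟩ := extraction_of_frequently_atTop (Filter.not_eventually.1 hcontra)
  push Not at hbad
  choose φ hφ hφ0 b hb hφb using hbad
  choose g hg hgm hg0 horbit using fun n =>
    hF.exists_selfMap hπ ha hπa (fun j _ => hwV j) (hφ n) (hφ0 n)
  have hgb : ∀ n, π (g n (b n)) ∉ SphereFatou F V := fun n hmem => by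
    have hbn := horbit n (b n) (mem_ball_zero_iff.2 ((hb n).trans_lt hr))
    exact hφb n (hbn.2 ▸ hF.iterate_mem_sphereFatou (m n) hbn.1 hmem)
  obtain ⟨p, hp, hlim, hball⟩ :=
    exists_tendsto_eventually_ball_subset_image (hyperfilter ℕ) hg hgm hg0 hr hb
  have hpJ : π p ∉ SphereFatou F V :=
    (isOpen_sphereFatou F V).isClosed_compl.mem_of_tendsto
      ((hπ.1 p hp).1.tendsto.comp hlim) (Eventually.of_forall hgb)
  obtain ⟨ε, hε, hcover⟩ := hball fun h => hpJ (h ▸ hπa ▸ hw)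
  have hstay : ∀ z ∈ ball p ε ∩ ball 0 1, ∀ k, F^[k] (π z) ∈ V ∩ F ⁻¹' U := by
    intro z hz k
    obtain ⟨n, hn, hkn⟩ := (hcover.and
      ((eventually_gt_atTop k).filter_mono Nat.hyperfilter_le_atTop)).exists
    obtain ⟨y, hy, rfl⟩ := hn hz.1
    exact (horbit n y hy).1 k (hkn.trans_le (hm.id_le n))
  exact hpJ <| SphereFatou.mem_of_orbit hF.analyticAt hthree (isOpen_ball.inter isOpen_ball)
    (fun z hz => hπ.1 z hz.2) (fun z hz => hπ.nhds_le_map hz.2) (fun z hz k => (hstay z hz k).1)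
    (fun z hz k => notMem_compl_iff.2 (hF.preimage_subset (hstay z hz k)))
    ⟨mem_ball_self hε, hp⟩

end IsBackwardCovering

end Dynamics

section HyperbolicDistance

/-- The holomorphic involution of the unit disc exchanging `0` and `a`. It recentres a disc
covering at `a`, and its modulus at `b` is the argument of the logarithm in `discDist a b`. -/
noncomputable def discInvolution (a z : ℂ) : ℂ := (a - z) / (1 - (starRingEnd ℂ) a * z)

lemma one_sub_conj_mul_ne_zero {a z : ℂ} (ha : ‖a‖ < 1) (hz : ‖z‖ < 1) :
    1 - (starRingEnd ℂ) a * z ≠ 0 := by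
  refine sub_ne_zero.2 fun h => ?_
  have hlt : ‖(starRingEnd ℂ) a * z‖ < 1 := by
    rw [norm_mul, RCLike.norm_conj]
    exact mul_lt_one_of_nonneg_of_lt_one_left (norm_nonneg a) ha hz.le
  exact hlt.ne (h ▸ norm_one)

lemma discInvolution_zero (a : ℂ) : discInvolution a 0 = a := by simp [discInvolution]

lemma norm_discInvolution_lt_one {a z : ℂ} (ha : ‖a‖ < 1) (hz : ‖z‖ < 1) :
    ‖discInvolution a z‖ < 1 := by
  have hden := norm_pos_iff.2 (one_sub_conj_mul_ne_zero ha hz)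
  rw [discInvolution, norm_div, div_lt_one hden, norm_sub_rev]
  refine lt_of_pow_lt_pow_left₀ 2 hden.le ?_
  have hgap : 0 < (1 - ‖a‖ ^ 2) * (1 - ‖z‖ ^ 2) :=
    mul_pos (by nlinarith [norm_nonneg a]) (by nlinarith [norm_nonneg z])
  have hsq := norm_one_add_smul_conj_mul_sq (-1) a z
  simp only [Complex.ofReal_neg, Complex.ofReal_one, neg_mul, one_mul,
    ← sub_eq_add_neg] at hsq
  linarith

lemma discInvolution_discInvolution {a z : ℂ} (ha : ‖a‖ < 1) (hz : ‖z‖ < 1) :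
    discInvolution a (discInvolution a z) = z := by
  have hcancel : discInvolution a z * (1 - (starRingEnd ℂ) a * z) = a - z :=
    div_mul_cancel₀ _ (one_sub_conj_mul_ne_zero ha hz)
  rw [discInvolution, div_eq_iff (one_sub_conj_mul_ne_zero ha (norm_discInvolution_lt_one ha hz))]
  linear_combination -hcancel

lemma analyticAt_discInvolution {a z : ℂ} (ha : ‖a‖ < 1) (hz : ‖z‖ < 1) :
    AnalyticAt ℂ (discInvolution a) z :=
  AnalyticAt.div (by fun_prop) (by fun_prop) (one_sub_conj_mul_ne_zero ha hz)

lemma discDist_eq_two_mul_artanh {a b : ℂ} (ha : ‖a‖ < 1) (hb : ‖b‖ < 1) :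
    discDist a b = 2 * Real.artanh ‖discInvolution a b‖ := by
  rw [Real.artanh_eq_half_log
    ⟨by linarith [norm_nonneg (discInvolution a b)], (norm_discInvolution_lt_one ha hb).le⟩]
  simp only [discDist, discInvolution]
  ring

lemma norm_discInvolution_lt_tanh {a b : ℂ} (ha : ‖a‖ < 1) (hb : ‖b‖ < 1) {C : ℝ}
    (h : discDist a b < C) : ‖discInvolution a b‖ < Real.tanh (C / 2) := by
  rw [discDist_eq_two_mul_artanh ha hb] at h
  rw [← Real.artanh_lt_artanh_iff
    ⟨by linarith [norm_nonneg (discInvolution a b)], norm_discInvolution_lt_one ha hb⟩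
    ⟨Real.neg_one_lt_tanh _, Real.tanh_lt_one _⟩, Real.artanh_tanh]
  linarith

variable {U E : Set (OnePoint ℂ)} {x : OnePoint ℂ} {C : ℝ}

lemma exists_covering_of_sphereHypDistToSet_lt (h : sphereHypDistToSet U x E < ENNReal.ofReal C) :
    ∃ π : ℂ → OnePoint ℂ, SphereDiscCovering π (connectedComponentIn U x) ∧
      ∃ a b : ℂ, ‖a‖ < 1 ∧ ‖b‖ < 1 ∧ π a = x ∧ π b ∈ E ∧ discDist a b < C := by
  simp only [sphereHypDistToSet, sphereHypDist, iInf_lt_iff] at h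
  obtain ⟨e, he, π, hπ, a, ⟨ha, hax⟩, b, ⟨hb, rfl⟩, hd⟩ := h
  exact ⟨π, hπ, a, b, mem_ball_zero_iff.1 ha, mem_ball_zero_iff.1 hb, hax, he,
    (ENNReal.ofReal_lt_ofReal_iff'.1 hd).1⟩

lemma exists_isHolomorphicDisc_of_sphereHypDistToSet_lt
    (h : sphereHypDistToSet U x E < ENNReal.ofReal C) :
    ∃ φ, IsHolomorphicDisc φ U ∧ φ 0 = x ∧ ∃ b : ℂ, ‖b‖ ≤ Real.tanh (C / 2) ∧ φ b ∈ E := by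
  obtain ⟨π, hπ, a, b, ha, hb, hax, hbE, hd⟩ := exists_covering_of_sphereHypDistToSet_lt h
  have hmaps : MapsTo (discInvolution a) (ball 0 1) (ball 0 1) := fun z hz =>
    mem_ball_zero_iff.2 (norm_discInvolution_lt_one ha (mem_ball_zero_iff.1 hz))
  refine ⟨fun z => π (discInvolution a z), ⟨fun z hz => ?_, fun z hz => ?_⟩, ?_,
    discInvolution a b, (norm_discInvolution_lt_tanh ha hb hd).le, ?_⟩
  · exact (hπ.1 _ (hmaps hz)).comp_analyticAt
      (analyticAt_discInvolution ha (mem_ball_zero_iff.1 hz))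
  · exact connectedComponentIn_subset U x (hπ.2.1 ▸ mem_image_of_mem π (hmaps hz))
  · simp only [discInvolution_zero, hax]
  · simp only [discInvolution_discInvolution ha hb, hbE]

end HyperbolicDistance

section Postsingular

variable {F : OnePoint ℂ → OnePoint ℂ} {V S : Set (OnePoint ℂ)}

lemma SpherePostsingular.singular_subset (F : OnePoint ℂ → OnePoint ℂ) (V S : Set (OnePoint ℂ)) :
    S ⊆ SpherePostsingular F V S := fun s hs =>
  subset_closure (mem_iUnion.2 ⟨0, s, ⟨hs, fun k hk => absurd hk k.not_lt_zero⟩, rfl⟩)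

lemma SpherePostsingular.apply_mem {u : OnePoint ℂ} (hF : ContinuousAt F u) (hV : V ∈ 𝓝 u)
    (hu : u ∈ SpherePostsingular F V S) : F u ∈ SpherePostsingular F V S := by
  refine mem_closure_iff_frequently.2 (hF.tendsto.frequently ?_)
  refine ((mem_closure_iff_frequently.1 hu).and_eventually hV).mono ?_
  rintro x ⟨hx, hxV⟩
  obtain ⟨n, s, ⟨hsS, hs⟩, rfl⟩ := mem_iUnion.1 hx
  refine mem_iUnion.2 ⟨n + 1, s, ⟨hsS, fun k hk => ?_⟩, Function.iterate_succ_apply' F n s⟩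
  rcases Nat.lt_succ_iff_lt_or_eq.1 hk with hkn | rfl
  · exact hs k hkn
  · exact hxV

lemma SphereSingularSet.isBackwardCovering (hS : SphereSingularSet F V S) (hV : IsOpen V)
    (hF : ∀ u ∈ V, SphereAnalyticAt F u) :
    IsBackwardCovering F V (SpherePostsingular F V S)ᶜ where
  isOpen_domain := hV
  analyticAt := hF
  isOpen := isClosed_closure.isOpen_compl
  covering := by
    have hcompl := compl_subset_compl.2 (SpherePostsingular.singular_subset F V S)
    have hcover : RestrictsToCovering F (V ∩ F ⁻¹' Sᶜ) Sᶜ := hS.2.1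
    have := hcover.inter_preimage hcompl
    rwa [inter_assoc, inter_eq_right.2 (preimage_mono hcompl)] at this
  preimage_subset u hu huP :=
    hu.2 (SpherePostsingular.apply_mem (hF u hu.1).1 (hV.mem_nhds hu.1) huP)

end Postsingular

theorem orbit_far_from_julia_general {F : OnePoint ℂ → OnePoint ℂ} {V U : Set (OnePoint ℂ)}
    (hF : IsBackwardCovering F V U)
    (hthree : ∃ a b c : OnePoint ℂ, a ∈ Uᶜ ∧ b ∈ Uᶜ ∧ c ∈ Uᶜ ∧ a ≠ b ∧ a ≠ c ∧ b ≠ c)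
    {w : OnePoint ℂ} (hw : w ∈ SphereFatou F V) (horbit : ∀ n, F^[n] w ∈ V ∧ F^[n] w ∈ U) :
    Tendsto (fun n => sphereHypDistToSet U (F^[n] w) (U ∩ (SphereFatou F V)ᶜ)) atTop (𝓝 ⊤) := by
  refine ENNReal.tendsto_nhds_top fun C => ?_
  by_contra hbounded
  have hC : ∃ᶠ n in atTop, sphereHypDistToSet U (F^[n] w) (U ∩ (SphereFatou F V)ᶜ) <
      ENNReal.ofReal (C + 1) := by
    refine (Filter.not_eventually.1 hbounded).mono fun n hn => (not_lt.1 hn).trans_lt ?_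
    rw [← ENNReal.ofReal_natCast, ENNReal.ofReal_lt_ofReal_iff (by positivity)]
    exact lt_add_one _
  obtain ⟨n₀, hn₀⟩ := hC.exists
  obtain ⟨π, hπ, a, -, ha, -, hπa, -, -⟩ := exists_covering_of_sphereHypDistToSet_lt hn₀
  have hshift : ∀ n, F^[n] (F^[n₀] w) = F^[n + n₀] w := fun n =>
    (Function.iterate_add_apply F n n₀ w).symm
  have hw₀ : F^[n₀] w ∈ SphereFatou F V := hF.iterate_mem_sphereFatou n₀
    (fun j _ => ⟨(horbit j).1, by
      rw [mem_preimage, ← Function.iterate_succ_apply' F j w]; exact (horbit (j + 1)).2⟩) hw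
  have hdiscs := hF.eventually_disc_mem_sphereFatou hthree hw₀
    (fun n => hshift n ▸ (horbit _).1) hπ (mem_ball_zero_iff.2 ha) hπa
    (Real.tanh_lt_one ((C + 1 : ℝ) / 2))
  simp only [hshift] at hdiscs
  rw [← Filter.map_add_atTop_eq_nat n₀, Filter.frequently_map] at hC
  obtain ⟨n, hn, hφ⟩ := (hC.and_eventually hdiscs).exists
  obtain ⟨φ, hφU, hφ0, b, hb, hbJ⟩ := exists_isHolomorphicDisc_of_sphereHypDistToSet_lt hn
  exact hbJ.2 (hφ φ hφU hφ0 b hb)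

/-- **Theorem (Statement 18).** Let `f : V → Ĉ` be holomorphic and nonconstant, not the
restriction of a conformal automorphism of `Ĉ`, let `U = Ĉ∖P(f)` (hyperbolic since `P(f)` has
at least three points), and let `w ∈ F(f)` with the whole orbit of `w` defined and contained
in `U`. Then `d_U(fⁿ(w), U ∩ J(f)) → ∞`. -/
theorem orbit_far_from_julia
    (V : Set (OnePoint ℂ)) (hVopen : IsOpen V) (hVne : V.Nonempty)
    (F : OnePoint ℂ → OnePoint ℂ)
    (hhol : ∀ u ∈ V, SphereAnalyticAt F u)
    (hnoncst : ¬∃ c : OnePoint ℂ, ∀ u ∈ V, F u = c)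
    (hnotaut : ¬∃ g : OnePoint ℂ → OnePoint ℂ,
      (∀ u : OnePoint ℂ, SphereAnalyticAt g u) ∧ Function.Bijective g ∧ ∀ u ∈ V, g u = F u)
    (S : Set (OnePoint ℂ)) (hS : SphereSingularSet F V S)
    (U : Set (OnePoint ℂ)) (hU : U = (SpherePostsingular F V S)ᶜ)
    (hthree : ∃ a b c : OnePoint ℂ, a ∈ SpherePostsingular F V S ∧
      b ∈ SpherePostsingular F V S ∧ c ∈ SpherePostsingular F V S ∧ a ≠ b ∧ a ≠ c ∧ b ≠ c)
    (w : OnePoint ℂ) (hw : w ∈ SphereFatou F V)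
    (horbit : ∀ n : ℕ, F^[n] w ∈ V ∧ F^[n] w ∈ U) :
    Tendsto (fun n : ℕ => sphereHypDistToSet U (F^[n] w) (U ∩ (SphereFatou F V)ᶜ))
      atTop (𝓝 ⊤) := by
  subst hU
  exact orbit_far_from_julia_general (hS.isBackwardCovering hVopen hhol) (by simpa using hthree)
    hw horbit
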